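/- arXiv:math/0209242 — 5 statements merged into one kernel-verified Lean document; each statement's English description precedes it below -/
import Mathlib

section
/- Let K be a field of characteristic p > 2 with p and m coprime, and let m, n be positive integers with m - m/n > 2. Let R = K[A,B,C,D,T]/I as above. Then there exists a power q = p^e such that (b^n t^{m-1})^q ∈ (a^q, d^q), i.e., b^n t^{m-1} lies in the Frobenius closure of (a, d). In particular, R is not F-pure. -/
open MvPolynomial

/-- The inductive step: `α^i σ^(ρ-i) d^(q-v) w^v ∈ J`, where `w = b^n - d`, `α = a²`, `ρ = k + g`. -/
theorem stmt4_aux {S : Type*} [CommRing S] (J : Ideal S) (a b c d s w : S) (n k g i : ℕ)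
    (haJ : a ^ (2 * k + 1) ∈ J) (hdJ : d ^ (2 * k + 1) ∈ J)
    (hw : w * b = a ^ 2 * d) (hs : s * w = c * d) (hb : b ^ n = w + d)
    (hi : i ≤ k) (hg : k + 1 ≤ n * g) (v : ℕ) (hv : v ≤ 2 * k + 1) :
    (a ^ 2) ^ i * s ^ (k + g - i) * (w ^ v * d ^ (2 * k + 1 - v)) ∈ J := by
  induction v using Nat.strong_induction_on with
  | _ v ih =>
    by_cases hvN : v ≤ k + g - i
    · obtain ⟨N, hN⟩ := Nat.exists_eq_add_of_le hvN
      have : (a ^ 2) ^ i * s ^ (k + g - i) * (w ^ v * d ^ (2 * k + 1 - v))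
          = ((a ^ 2) ^ i * s ^ N * c ^ v) * d ^ (2 * k + 1) := by
        have h1 : d ^ (2 * k + 1) = d ^ v * d ^ (2 * k + 1 - v) := by
          rw [← pow_add]; congr 1; omega
        rw [hN, h1, pow_add]
        calc _ = (a ^ 2) ^ i * s ^ N * (s * w) ^ v * d ^ (2 * k + 1 - v) := by
              rw [mul_pow s w]; ring
          _ = _ := by rw [hs, mul_pow]; ring
      rw [this]
      exact J.mul_mem_left _ hdJ
    · push Not at hvN
      obtain ⟨j, hj⟩ : ∃ j, j = k + 1 - i := ⟨_, rfl⟩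
      obtain ⟨h, hh⟩ : ∃ h, v = j + h := ⟨v - j, by omega⟩
      have hgh : g ≤ h := by omega
      have hnh : j ≤ n * h := by
        have := Nat.mul_le_mul_left n hgh
        omega
      obtain ⟨x, hx⟩ := Nat.exists_eq_add_of_le hnh
      have hmem : (a ^ 2) ^ i * s ^ (k + g - i) *
          (b ^ (n * h) * w ^ j * d ^ (2 * k + 1 - v)) ∈ J := by
        have : (a ^ 2) ^ i * s ^ (k + g - i) * (b ^ (n * h) * w ^ j * d ^ (2 * k + 1 - v))
            = (a * s ^ (k + g - i) * b ^ x * d ^ j * d ^ (2 * k + 1 - v)) * a ^ (2 * k + 1) := by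
          have h2 : a * a ^ (2 * k + 1) = (a ^ 2) ^ i * (a ^ 2) ^ j := by
            rw [← pow_add, ← pow_mul, ← pow_succ']; congr 1; omega
          calc _ = (a ^ 2) ^ i * s ^ (k + g - i) * ((w * b) ^ j * b ^ x * d ^ (2 * k + 1 - v)) := by
                rw [hx, mul_pow, pow_add]; ring
            _ = ((a ^ 2) ^ i * (a ^ 2) ^ j) *
                  (s ^ (k + g - i) * b ^ x * d ^ j * d ^ (2 * k + 1 - v)) := by
                rw [hw, mul_pow]; ring
            _ = _ := by rw [← h2]; ring
        rw [this]
        exact J.mul_mem_left _ haJ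
      have hexp : (a ^ 2) ^ i * s ^ (k + g - i) * (b ^ (n * h) * w ^ j * d ^ (2 * k + 1 - v))
          = (∑ l ∈ Finset.range h, (h.choose l : S) *
              ((a ^ 2) ^ i * s ^ (k + g - i) * (w ^ (j + l) * d ^ (2 * k + 1 - (j + l)))))
            + (a ^ 2) ^ i * s ^ (k + g - i) * (w ^ v * d ^ (2 * k + 1 - v)) := by
        rw [pow_mul, hb, add_pow, Finset.sum_range_succ, add_mul, add_mul, mul_add]
        congr 1
        · rw [Finset.sum_mul, Finset.sum_mul, Finset.mul_sum]
          refine Finset.sum_congr rfl fun l hl => ?_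
          have hl := Finset.mem_range.mp hl
          have : 2 * k + 1 - (j + l) = (h - l) + (2 * k + 1 - v) := by omega
          rw [this, pow_add, pow_add]; ring
        · rw [hh, pow_add]; simp; ring
      rw [hexp] at hmem
      refine (Ideal.add_mem_iff_right J ?_).mp hmem
      refine J.sum_mem fun l hl => J.mul_mem_left _ (ih _ ?_ ?_)
      · have hl := Finset.mem_range.mp hl; omega
      · have hl := Finset.mem_range.mp hl; omega

/-- The ring-theoretic core. -/
theorem stmt4_core {S : Type*} [CommRing S] (J : Ideal S) (a b c d s w t : S) (m n k g f : ℕ)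
    (haJ : a ^ (2 * k + 1) ∈ J) (hdJ : d ^ (2 * k + 1) ∈ J)
    (hw : w * b = a ^ 2 * d) (hs : s * w = c * d) (hb : b ^ n = w + d)
    (ht : t ^ m = s - a ^ 2)
    (hg : k + 1 ≤ n * g) (hf : (m - 1) * (2 * k + 1) = m * (k + g) + f) :
    (b ^ n * t ^ (m - 1)) ^ (2 * k + 1) ∈ J := by
  rw [mul_pow, ← pow_mul t, hf, pow_add t, pow_mul t, ht, hb, sub_eq_neg_add, add_pow, add_pow,
    ← mul_assoc]
  refine J.mul_mem_right _ ?_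
  rw [Finset.sum_mul_sum]
  refine J.sum_mem fun v hv => J.sum_mem fun i hi => ?_
  have hv := Finset.mem_range.mp hv
  have hkey : (a ^ 2) ^ i * s ^ (k + g - i) * (w ^ v * d ^ (2 * k + 1 - v)) ∈ J := by
    by_cases hik : i ≤ k
    · exact stmt4_aux J a b c d s w n k g i haJ hdJ hw hs hb hik hg v (by omega)
    · refine J.mul_mem_right _ (J.mul_mem_right _ ?_)
      rw [← pow_mul]
      exact J.pow_mem_of_pow_mem haJ (by omega)
  rw [neg_pow]
  convert J.mul_mem_left ((-1) ^ i * ((2 * k + 1).choose v : S) * ((k + g).choose i : S)) hkey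
    using 1
  ring

/-- with char K = p > 2, gcd(p,m) = 1 and mn - m - 2n > 0, the element
bⁿt^{m-1} lies in the Frobenius closure of (a, d): there is q = p^e with
(bⁿt^{m-1})^q ∈ (a^q, d^q).  (Hence R is not F-pure.) -/
theorem stmt4 (K : Type) [Field K] (p : ℕ) [Fact p.Prime] [CharP K p] (hp : 2 < p)
    (m n : ℕ) (hm : 0 < m) (hn : 0 < n) (hmn : m + 2 * n < m * n) (hpm : Nat.Coprime p m)
    (I : Ideal (MvPolynomial (Fin 5) K))
    (hI : I = Ideal.span
      { (X 0 ^ 2) * (X 0 ^ 2 + X 4 ^ m) - X 1 * X 2,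
        (X 0 ^ 2 + X 4 ^ m) * (X 1 ^ n - X 3) - X 2 * X 3,
        X 1 * (X 1 ^ n - X 3) - (X 0 ^ 2) * X 3 })
    (a b d t : MvPolynomial (Fin 5) K ⧸ I)
    (ha : a = Ideal.Quotient.mk I (X 0)) (hb : b = Ideal.Quotient.mk I (X 1))
    (hd : d = Ideal.Quotient.mk I (X 3)) (ht : t = Ideal.Quotient.mk I (X 4)) :
    ∃ e : ℕ, (b ^ n * t ^ (m - 1)) ^ (p ^ e) ∈
      Ideal.span {a ^ (p ^ e), d ^ (p ^ e)} := by
  have hodd : Odd (p ^ (2 * m + 1)) :=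
    ((Fact.out : p.Prime).odd_of_ne_two (by omega)).pow
  have hlt : 2 * m + 1 < p ^ (2 * m + 1) := Nat.lt_pow_self (by omega)
  refine ⟨2 * m + 1, ?_⟩
  obtain ⟨k, hk⟩ := hodd
  rw [hk] at hlt ⊢
  have hkm : m ≤ k := by omega
  -- numerics
  obtain ⟨M, rfl⟩ : ∃ M, m = M + 1 := ⟨m - 1, by omega⟩
  have hM : 2 ≤ M := by
    by_contra hcon
    have : M = 0 ∨ M = 1 := by omega
    rcases this with rfl | rfl <;> omega
  obtain ⟨ρ, hρ⟩ : ∃ ρ, ρ = (M * (2 * k + 1)) / (M + 1) := ⟨_, rfl⟩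
  obtain ⟨f, hf⟩ : ∃ f, f = (M * (2 * k + 1)) % (M + 1) := ⟨_, rfl⟩
  have hdiv : (M + 1) * ρ + f = M * (2 * k + 1) := by rw [hρ, hf]; exact Nat.div_add_mod _ _
  have hfl : f ≤ M := by
    have := Nat.mod_lt (M * (2 * k + 1)) (show 0 < M + 1 by omega)
    omega
  have hkρ : k ≤ ρ := by
    by_contra hcon
    have h1 : ρ + 1 ≤ k := by omega
    nlinarith
  obtain ⟨g, rfl⟩ := Nat.exists_eq_add_of_le hkρ
  have hg : k + 1 ≤ n * g := by
    have h1 : (M - 1) * k ≤ (M + 1) * g := by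
      obtain ⟨L, rfl⟩ : ∃ L, M = L + 1 := ⟨M - 1, by omega⟩
      simp only [Nat.add_sub_cancel]
      nlinarith
    obtain ⟨L, rfl⟩ : ∃ L, M = L + 1 := ⟨M - 1, by omega⟩
    simp only [Nat.add_sub_cancel] at h1
    have h2 : L + 1 + 1 + 1 ≤ L * n := by nlinarith
    have h3 : (L + 1 + 1 + 1) * k ≤ (L * n) * k := Nat.mul_le_mul_right _ h2
    have h4 : n * (L * k) ≤ n * ((L + 1 + 1) * g) := Nat.mul_le_mul_left _ h1
    have h5 : (L + 1 + 1) * (k + 1) ≤ (L + 1 + 1) * (n * g) := by nlinarith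
    exact Nat.le_of_mul_le_mul_left h5 (by omega)
  have hrel2 : Ideal.Quotient.mk I
      ((X 0 ^ 2 + X 4 ^ (M + 1)) * (X 1 ^ n - X 3) - X 2 * X 3) = 0 := by
    rw [Ideal.Quotient.eq_zero_iff_mem, hI]; exact Ideal.subset_span (by simp)
  have hrel3 : Ideal.Quotient.mk I
      (X 1 * (X 1 ^ n - X 3) - (X 0 ^ 2) * X 3) = 0 := by
    rw [Ideal.Quotient.eq_zero_iff_mem, hI]; exact Ideal.subset_span (by simp)
  simp only [map_sub, map_mul, map_add, map_pow, ← ha, ← hb, ← hd, ← ht] at hrel2 hrel3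
  refine stmt4_core _ a b (Ideal.Quotient.mk I (X 2)) d (a ^ 2 + t ^ (M + 1)) (b ^ n - d) t
    (M + 1) n k g f (Ideal.subset_span (by simp)) (Ideal.subset_span (by simp)) ?_ ?_ ?_ ?_ hg ?_
  · rw [← sub_eq_zero, ← hrel3]; ring
  · rw [← sub_eq_zero, ← hrel2]
  · ring
  · ring
  · rw [hdiv]; simp
end

section
/- Let K be a field and m, n positive integers. Let R = K[A,B,C,D,T]/I where I is generated by the 2×2 minors of the matrix with rows (A²+T^m, B, D) and (C, A², B^n - D). Then the images t, c, d form a system of parameters: R/(t, c, d) has Krull dimension 0, and R has Krull dimension 3. -/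
open MvPolynomial

lemma aux_dim_eq {R S : Type*} [CommRing R] [CommRing S] [Algebra R S] [Algebra.IsIntegral R S]
    (hinj : Function.Injective (algebraMap R S)) : ringKrullDim S = ringKrullDim R := by
  apply le_antisymm
  · refine Order.krullDim_le_of_strictMono (PrimeSpectrum.comap (algebraMap R S)) ?_
    intro p q hpq
    exact Ideal.IsIntegral.comap_lt_comap (R := R) (I := p.asIdeal) (J := q.asIdeal) hpq
  · refine iSup_le fun l => ?_
    obtain ⟨Q, -, hQ, hQ'⟩ := Ideal.exists_ideal_over_prime_of_isIntegral (S := S)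
      (RelSeries.head l).asIdeal ⊥ (by
        rw [← RingHom.ker_eq_comap_bot, (RingHom.injective_iff_ker_eq_bot _).1 hinj]
        exact bot_le)
    have : Q.LiesOver (RelSeries.head l).asIdeal := ⟨hQ'.symm⟩
    obtain ⟨L, hL, -⟩ := Ideal.exists_ltSeries_of_hasGoingUp (S := S) l Q
    rw [← hL]
    exact le_iSup (fun L : LTSeries (PrimeSpectrum S) => ((L.length : ℕ∞) : WithBot ℕ∞)) L

lemma aux_int_b {S R : Type*} [CommRing S] [CommRing R] [Algebra S R] (a b : R) (c d t : S)
    (m n : ℕ) (hn : 0 < n)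
    (h1 : a ^ 2 * (a ^ 2 + algebraMap S R t ^ m) - b * algebraMap S R c = 0)
    (h3 : b * (b ^ n - algebraMap S R d) - a ^ 2 * algebraMap S R d = 0) :
    IsIntegral S b := by
  nontriviality S
  refine ⟨Polynomial.X ^ (2 * n + 2) + (- Polynomial.C (d + d) * Polynomial.X ^ (n + 2)
    + Polynomial.C (d ^ 2) * Polynomial.X ^ 2 + Polynomial.C (t ^ m * d) * Polynomial.X ^ (n + 1)
    - Polynomial.C (t ^ m * d ^ 2 + d ^ 2 * c) * Polynomial.X), ?_, ?_⟩
  · apply Polynomial.monic_X_pow_add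
    have : (- Polynomial.C (d + d) * Polynomial.X ^ (n + 2)
      + Polynomial.C (d ^ 2) * Polynomial.X ^ 2 + Polynomial.C (t ^ m * d) * Polynomial.X ^ (n + 1)
      - Polynomial.C (t ^ m * d ^ 2 + d ^ 2 * c) * Polynomial.X).degree ≤ ((n + 2 : ℕ) : WithBot ℕ) := by
      rw [← Polynomial.natDegree_le_iff_degree_le]
      compute_degree
    refine this.trans_lt ?_
    exact_mod_cast (by omega : n + 2 < 2 * n + 2)
  · simp only [Polynomial.eval₂_add, Polynomial.eval₂_sub, Polynomial.eval₂_mul,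
      Polynomial.eval₂_neg, Polynomial.eval₂_pow, Polynomial.eval₂_X, Polynomial.eval₂_C, map_add,
      map_mul, map_pow]
    generalize algebraMap S R t ^ m = u at *
    generalize algebraMap S R d = e at *
    generalize algebraMap S R c = f at *
    have e1 : b ^ (2 * n + 2) = (b ^ n) ^ 2 * b ^ 2 := by ring
    rw [e1, pow_add b n 2, pow_succ b n]
    generalize b ^ n = w at *
    linear_combination (e ^ 2) * h1 + (w * b - b * e + a ^ 2 * e + u * e) * h3

lemma aux_int_a {S R : Type*} [CommRing S] [CommRing R] [Algebra S R] (a b : R) (c t : S)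
    (m : ℕ) (hb : IsIntegral S b)
    (h1 : a ^ 2 * (a ^ 2 + algebraMap S R t ^ m) - b * algebraMap S R c = 0) :
    IsIntegral S a := by
  nontriviality S
  let B := Algebra.adjoin S {b}
  have : Algebra.IsIntegral S B := Algebra.IsIntegral.adjoin (by simpa using hb)
  have : IsIntegral B a := by
    let β : B := ⟨b, Algebra.subset_adjoin rfl⟩
    refine ⟨Polynomial.X ^ 4 + (Polynomial.C (algebraMap S B t ^ m) * Polynomial.X ^ 2 -
      Polynomial.C (β * algebraMap S B c)), ?_, ?_⟩
    · apply Polynomial.monic_X_pow_add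
      have : (Polynomial.C (algebraMap S B t ^ m) * Polynomial.X ^ 2 -
        Polynomial.C (β * algebraMap S B c)).degree ≤ ((2 : ℕ) : WithBot ℕ) := by
        rw [← Polynomial.natDegree_le_iff_degree_le]
        compute_degree
      refine this.trans_lt ?_
      exact_mod_cast (by omega : 2 < 4)
    · simp only [Polynomial.eval₂_add, Polynomial.eval₂_sub, Polynomial.eval₂_mul,
        Polynomial.eval₂_pow, Polynomial.eval₂_X, Polynomial.eval₂_C,
        map_mul, map_pow, ← IsScalarTower.algebraMap_apply]
      have : algebraMap B R β = b := rfl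
      rw [this]
      linear_combination h1
  exact isIntegral_trans a this

lemma aux_int_all {K S A : Type*} [CommRing K] [CommRing S] [CommRing A] [Algebra K A]
    [Algebra S A] [Algebra K S] [IsScalarTower K S A]
    {σ : Type*} (φ : MvPolynomial σ K →ₐ[K] A) (hφ : Function.Surjective φ)
    (h : ∀ i, IsIntegral S (φ (X i))) : Algebra.IsIntegral S A := by
  refine ⟨fun x => ?_⟩
  obtain ⟨p, rfl⟩ := hφ x
  induction p using MvPolynomial.induction_on with
  | C r =>
    have : φ (C r) = algebraMap S A (algebraMap K S r) := by
      rw [← IsScalarTower.algebraMap_apply]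
      exact φ.commutes r
    rw [this]
    exact isIntegral_algebraMap
  | add p q hp hq => rw [map_add]; exact hp.add hq
  | mul_X p i hp => rw [map_mul]; exact hp.mul (h i)

lemma aux_exists {L : Type*} [Field L] [IsAlgClosed L] (c d t : L) (m n : ℕ) (hn : 0 < n)
    (hd : d ≠ 0) (hct : t ^ m + c ≠ 0) : ∃ a b : L,
      a ^ 2 * (a ^ 2 + t ^ m) - b * c = 0 ∧ (a ^ 2 + t ^ m) * (b ^ n - d) - c * d = 0 ∧
      b * (b ^ n - d) - a ^ 2 * d = 0 := by
  let p : Polynomial L := Polynomial.X ^ (2 * n + 1) + (- Polynomial.C (d + d) * Polynomial.X ^ (n + 1)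
    + Polynomial.C (d ^ 2) * Polynomial.X + Polynomial.C (t ^ m * d) * Polynomial.X ^ n
    - Polynomial.C (d ^ 2 * (t ^ m + c)))
  have hq : (- Polynomial.C (d + d) * Polynomial.X ^ (n + 1)
    + Polynomial.C (d ^ 2) * Polynomial.X + Polynomial.C (t ^ m * d) * Polynomial.X ^ n
    - Polynomial.C (d ^ 2 * (t ^ m + c))).degree < ((2 * n + 1 : ℕ) : WithBot ℕ) := by
    have : (- Polynomial.C (d + d) * Polynomial.X ^ (n + 1)
      + Polynomial.C (d ^ 2) * Polynomial.X + Polynomial.C (t ^ m * d) * Polynomial.X ^ n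
      - Polynomial.C (d ^ 2 * (t ^ m + c))).degree ≤ ((n + 1 : ℕ) : WithBot ℕ) := by
      rw [← Polynomial.natDegree_le_iff_degree_le]
      compute_degree
    refine this.trans_lt ?_
    exact_mod_cast (by omega : n + 1 < 2 * n + 1)
  have hpd : p.degree = ((2 * n + 1 : ℕ) : WithBot ℕ) := by
    rw [Polynomial.degree_add_eq_left_of_degree_lt] <;> rw [Polynomial.degree_X_pow]
    exact hq
  obtain ⟨b, hb⟩ := IsAlgClosed.exists_root p (by
    rw [hpd]; exact_mod_cast (by omega : 2 * n + 1 ≠ 0))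
  have hb' : b ^ (2 * n + 1) + (- (d + d) * b ^ (n + 1) + d ^ 2 * b + t ^ m * d * b ^ n
    - d ^ 2 * (t ^ m + c)) = 0 := by
    simpa [p, Polynomial.IsRoot] using hb
  have hb0 : b ≠ 0 := by
    rintro rfl
    have : n ≠ 0 := hn.ne'
    simp [this, hd, hct] at hb'
  obtain ⟨a, ha⟩ := IsAlgClosed.exists_pow_nat_eq (b * (b ^ n - d) / d) (n := 2) (by norm_num)
  have h3 : b * (b ^ n - d) - a ^ 2 * d = 0 := by
    rw [ha]; field_simp; ring
  have e1 : b ^ (2 * n + 1) = (b ^ n) ^ 2 * b := by ring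
  rw [e1, pow_succ b n] at hb'
  have h1 : a ^ 2 * (a ^ 2 + t ^ m) - b * c = 0 := by
    have : d ^ 2 * (a ^ 2 * (a ^ 2 + t ^ m) - b * c) = 0 := by
      linear_combination b * hb' - (b ^ n * b - b * d + a ^ 2 * d + t ^ m * d) * h3
    simpa [hd] using this
  refine ⟨a, b, h1, ?_, h3⟩
  have : b * ((a ^ 2 + t ^ m) * (b ^ n - d) - c * d) = 0 := by
    linear_combination d * h1 + (a ^ 2 + t ^ m) * h3
  simpa [hb0] using this

lemma aux_zero {K A : Type*} [Field K] [CommRing A] [Nontrivial A] [Algebra K A]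
    (φ : MvPolynomial (Fin 5) K →ₐ[K] A) (hφ : Function.Surjective φ) (m n : ℕ) (hn : 0 < n)
    (s1 : φ (X 0) ^ 2 * (φ (X 0) ^ 2 + 0 ^ m) - φ (X 1) * 0 = 0)
    (s3 : φ (X 1) * (φ (X 1) ^ n - 0) - φ (X 0) ^ 2 * 0 = 0)
    (z2 : φ (X 2) = 0) (z3 : φ (X 3) = 0) (z4 : φ (X 4) = 0) : ringKrullDim A = 0 := by
  have ib : IsIntegral K (φ (X 1)) :=
    aux_int_b (φ (X 0)) (φ (X 1)) 0 0 0 m n hn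
      (by simpa only [map_zero] using s1) (by simpa only [map_zero] using s3)
  have ia : IsIntegral K (φ (X 0)) :=
    aux_int_a (φ (X 0)) (φ (X 1)) 0 0 m ib (by simpa only [map_zero] using s1)
  have : Algebra.IsIntegral K A := by
    refine aux_int_all (S := K) φ hφ ?_
    intro i
    fin_cases i
    · exact ia
    · exact ib
    · exact z2 ▸ isIntegral_zero
    · exact z3 ▸ isIntegral_zero
    · exact z4 ▸ isIntegral_zero
  rw [aux_dim_eq (algebraMap K A).injective, ringKrullDim_eq_zero_of_field]

lemma aux_zero' {K A : Type*} [Field K] [CommRing A] [Nontrivial A]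
    (φ : MvPolynomial (Fin 5) K →+* A) (hφ : Function.Surjective φ) (m n : ℕ) (hn : 0 < n)
    (s1 : φ (X 0) ^ 2 * (φ (X 0) ^ 2 + 0 ^ m) - φ (X 1) * 0 = 0)
    (s3 : φ (X 1) * (φ (X 1) ^ n - 0) - φ (X 0) ^ 2 * 0 = 0)
    (z2 : φ (X 2) = 0) (z3 : φ (X 3) = 0) (z4 : φ (X 4) = 0) : ringKrullDim A = 0 := by
  let _ : Algebra K A := (φ.comp C).toAlgebra
  let ψ : MvPolynomial (Fin 5) K →ₐ[K] A := { φ with commutes' := fun r => rfl }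
  exact aux_zero ψ hφ m n hn s1 s3 z2 z3 z4

/-- t, c, d form a homogeneous system of parameters for
R = K[A,B,C,D,T]/I (variables 0=A, 1=B, 2=C, 3=D, 4=T):
R has Krull dimension 3 and R/(t,c,d) has Krull dimension 0. -/
theorem stmt8 (K : Type) [Field K] (m n : ℕ) (hm : 0 < m) (hn : 0 < n)
    (I : Ideal (MvPolynomial (Fin 5) K))
    (hI : I = Ideal.span
      { (X 0 ^ 2) * (X 0 ^ 2 + X 4 ^ m) - X 1 * X 2,
        (X 0 ^ 2 + X 4 ^ m) * (X 1 ^ n - X 3) - X 2 * X 3,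
        X 1 * (X 1 ^ n - X 3) - (X 0 ^ 2) * X 3 })
    (c d t : MvPolynomial (Fin 5) K ⧸ I)
    (hc : c = Ideal.Quotient.mk I (X 2)) (hd : d = Ideal.Quotient.mk I (X 3))
    (ht : t = Ideal.Quotient.mk I (X 4)) :
    ringKrullDim (MvPolynomial (Fin 5) K ⧸ I) = 3 ∧
    ringKrullDim ((MvPolynomial (Fin 5) K ⧸ I) ⧸ (Ideal.span {t, c, d})) = 0 := by
  -- universal property of the quotient by `I`
  have lift : ∀ (L : Type) [CommRing L] [Algebra K L] (v : Fin 5 → L),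
      v 0 ^ 2 * (v 0 ^ 2 + v 4 ^ m) - v 1 * v 2 = 0 →
      (v 0 ^ 2 + v 4 ^ m) * (v 1 ^ n - v 3) - v 2 * v 3 = 0 →
      v 1 * (v 1 ^ n - v 3) - v 0 ^ 2 * v 3 = 0 →
      ∃ g : (MvPolynomial (Fin 5) K ⧸ I) →ₐ[K] L, ∀ i, g (Ideal.Quotient.mk I (X i)) = v i := by
    intro L _ _ v h1 h2 h3
    have hle : I ≤ RingHom.ker (aeval v : MvPolynomial (Fin 5) K →ₐ[K] L) := by
      rw [hI, Ideal.span_le]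
      rintro x (rfl | rfl | rfl) <;>
        simp only [SetLike.mem_coe, RingHom.mem_ker, map_sub, map_mul, map_add, map_pow, aeval_X] <;>
        assumption
    refine ⟨Ideal.Quotient.liftₐ I (aeval v) (fun x hx => hle hx), fun i => ?_⟩
    exact aeval_X (R := K) v i
  set q := Ideal.Quotient.mk I with hqdef
  have r1 : q (X 0) ^ 2 * (q (X 0) ^ 2 + q (X 4) ^ m) - q (X 1) * q (X 2) = 0 := by
    simp only [← map_pow, ← map_add, ← map_mul, ← map_sub]
    rw [hqdef, Ideal.Quotient.eq_zero_iff_mem, hI]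
    exact Ideal.subset_span (by simp)
  have r3 : q (X 1) * (q (X 1) ^ n - q (X 3)) - q (X 0) ^ 2 * q (X 3) = 0 := by
    simp only [← map_pow, ← map_add, ← map_mul, ← map_sub]
    rw [hqdef, Ideal.Quotient.eq_zero_iff_mem, hI]
    exact Ideal.subset_span (by simp)
  constructor
  · let f : MvPolynomial (Fin 3) K →ₐ[K] (MvPolynomial (Fin 5) K ⧸ I) := aeval ![c, d, t]
    let _ : Algebra (MvPolynomial (Fin 3) K) (MvPolynomial (Fin 5) K ⧸ I) := f.toRingHom.toAlgebra
    have hf : ∀ x, algebraMap (MvPolynomial (Fin 3) K) (MvPolynomial (Fin 5) K ⧸ I) x = f x :=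
      fun _ => rfl
    have : IsScalarTower K (MvPolynomial (Fin 3) K) (MvPolynomial (Fin 5) K ⧸ I) :=
      IsScalarTower.of_algebraMap_eq fun x => (f.commutes x).symm
    have f0 : f (X 0) = q (X 2) := by simp [f, hc]
    have f1 : f (X 1) = q (X 3) := by simp [f, hd]
    have f2 : f (X 2) = q (X 4) := by simp [f, ht]
    have ib : IsIntegral (MvPolynomial (Fin 3) K) (q (X 1)) :=
      aux_int_b (q (X 0)) (q (X 1)) (X 0) (X 1) (X 2) m n hn
        (by rw [hf, hf, f0, f2]; exact r1) (by rw [hf, f1]; exact r3)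
    have ia : IsIntegral (MvPolynomial (Fin 3) K) (q (X 0)) :=
      aux_int_a (q (X 0)) (q (X 1)) (X 0) (X 2) m ib
        (by rw [hf, hf, f0, f2]; exact r1)
    have : Algebra.IsIntegral (MvPolynomial (Fin 3) K) (MvPolynomial (Fin 5) K ⧸ I) := by
      refine aux_int_all (Ideal.Quotient.mkₐ K I) (Ideal.Quotient.mkₐ_surjective K I) ?_
      intro i
      fin_cases i
      · exact ia
      · exact ib
      · exact f0 ▸ isIntegral_algebraMap (x := X 0)
      · exact f1 ▸ isIntegral_algebraMap (x := X 1)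
      · exact f2 ▸ isIntegral_algebraMap (x := X 2)
    have hinj : Function.Injective
        (algebraMap (MvPolynomial (Fin 3) K) (MvPolynomial (Fin 5) K ⧸ I)) := by
      let P := MvPolynomial (Fin 3) K
      let L := AlgebraicClosure (FractionRing P)
      have hL : Function.Injective (algebraMap P L) := by
        rw [IsScalarTower.algebraMap_eq P (FractionRing P) L]
        exact (algebraMap (FractionRing P) L).injective.comp (IsFractionRing.injective P _)
      obtain ⟨a, b, h1, h2, h3⟩ := aux_exists (algebraMap P L (X 0)) (algebraMap P L (X 1))
        (algebraMap P L (X 2)) m n hn (by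
          rw [Ne, map_eq_zero_iff _ hL]; exact X_ne_zero _) (by
          rw [← map_pow, ← map_add, Ne, map_eq_zero_iff _ hL]
          intro h
          have := congrArg (aeval (R := K) (![1, 0, 0] : Fin 3 → K)) h
          simp [hm.ne'] at this)
      obtain ⟨g, hg⟩ := lift L
        ![a, b, algebraMap P L (X 0), algebraMap P L (X 1), algebraMap P L (X 2)] h1 h2 h3
      have hcomp : g.comp f = IsScalarTower.toAlgHom K P L := by
        apply MvPolynomial.algHom_ext
        intro i
        rw [AlgHom.comp_apply]
        fin_cases i
        · exact (congrArg g f0).trans (hg 2)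
        · exact (congrArg g f1).trans (hg 3)
        · exact (congrArg g f2).trans (hg 4)
      intro x y hxy
      apply hL
      have hx := DFunLike.congr_fun hcomp x
      have hy := DFunLike.congr_fun hcomp y
      exact hx.symm.trans ((congrArg g hxy).trans hy)
    rw [aux_dim_eq hinj, MvPolynomial.ringKrullDim_of_isNoetherianRing,
      ringKrullDim_eq_zero_of_field]
    simp
  · let J : Ideal (MvPolynomial (Fin 5) K ⧸ I) := Ideal.span {t, c, d}
    change ringKrullDim ((MvPolynomial (Fin 5) K ⧸ I) ⧸ J) = 0
    have z2 : Ideal.Quotient.mk J (q (X 2)) = 0 := by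
      rw [Ideal.Quotient.eq_zero_iff_mem, ← hc]; exact Ideal.subset_span (by simp)
    have z3 : Ideal.Quotient.mk J (q (X 3)) = 0 := by
      rw [Ideal.Quotient.eq_zero_iff_mem, ← hd]; exact Ideal.subset_span (by simp)
    have z4 : Ideal.Quotient.mk J (q (X 4)) = 0 := by
      rw [Ideal.Quotient.eq_zero_iff_mem, ← ht]; exact Ideal.subset_span (by simp)
    have s1 := congrArg (Ideal.Quotient.mk J) r1
    have s3 := congrArg (Ideal.Quotient.mk J) r3
    simp only [map_sub, map_mul, map_add, map_pow, map_zero, z2, z3, z4] at s1 s3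
    have : Nontrivial ((MvPolynomial (Fin 5) K ⧸ I) ⧸ J) := by
      rw [Ideal.Quotient.nontrivial_iff]
      obtain ⟨g, hg⟩ := lift K 0 (by simp) (by simp [hn.ne']) (by simp)
      have : J ≤ RingHom.ker g := by
        rw [Ideal.span_le]
        rintro x (rfl | rfl | rfl)
        · rw [ht]; exact hg 4
        · rw [hc]; exact hg 2
        · rw [hd]; exact hg 3
      exact ne_top_of_le_ne_top (RingHom.ker_ne_top g) this
    let φ : MvPolynomial (Fin 5) K →+* ((MvPolynomial (Fin 5) K ⧸ I) ⧸ J) :=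
      (Ideal.Quotient.mk J).comp q
    have hφ : Function.Surjective φ :=
      Ideal.Quotient.mk_surjective.comp Ideal.Quotient.mk_surjective
    have key := aux_zero' (K := K) (A := (MvPolynomial (Fin 5) K ⧸ I) ⧸ J) φ hφ m n hn
    exact key s1 s3 z2 z3 z4
end

section
/- Let K be a field of characteristic p > 2, and m, n positive integers. Let R = K[A,B,C,D,T]/I with I generated by the 2×2 minors of the matrix with rows (A²+T^m, B, D), (C, A², B^n - D). Then the singular locus of Spec R is V(J) where J = (a, b, c(c + t^m), d). -/
open MvPolynomial

/-- A Noetherian local ring is regular if its maximal ideal is generated by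
dim-many elements. -/
def IsRegularLocal (S : Type) [CommRing S] [IsLocalRing S] : Prop :=
  IsNoetherianRing S ∧ ∃ s : Finset S, Ideal.span (s : Set S) = IsLocalRing.maximalIdeal S ∧
    (s.card : WithBot (WithTop ℕ)) = ringKrullDim S



open IsLocalRing in
lemma exchange {S : Type} [CommRing S] [IsLocalRing S] (s : Finset S) (f : S)
    (hs : Ideal.span (s : Set S) = maximalIdeal S) (hf : f ∈ maximalIdeal S)
    (hf2 : f ∉ maximalIdeal S ^ 2) :
    ∃ x ∈ s, ∀ y ∈ s, y ∈ Ideal.span {f} ⊔ Ideal.span {z | z ∈ s ∧ z ≠ x} := by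
  classical
  rw [← hs] at hf
  obtain ⟨c, hc⟩ := Submodule.mem_span_finset'.1 hf
  have : ∃ i : s, c i ∉ maximalIdeal S := by
    by_contra! h
    apply hf2
    rw [← hc]
    refine Ideal.sum_mem _ fun i _ => ?_
    rw [pow_two, smul_eq_mul]
    refine Ideal.mul_mem_mul (h i) ?_
    rw [← hs]; exact Ideal.subset_span i.2
  obtain ⟨i, hi⟩ := this
  have hu : IsUnit (c i) := by simpa using hi
  refine ⟨i, i.2, fun y hy => ?_⟩
  set J := Ideal.span {f} ⊔ Ideal.span {z | z ∈ s ∧ z ≠ (i : S)} with hJ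
  have key : ∀ z ∈ s, z ≠ (i : S) → z ∈ J := fun z hz hne =>
    (le_sup_right : _ ≤ J) (Ideal.subset_span ⟨hz, hne⟩)
  by_cases h : y = i
  · have hfJ : f ∈ J := (le_sup_left : _ ≤ J) (Ideal.subset_span rfl)
    have h1 : c i * (i : S) ∈ J := by
      have e : c i * (i : S) = f - ∑ j ∈ (Finset.univ : Finset s).erase i, c j • (j : S) := by
        rw [← hc, ← Finset.add_sum_erase _ _ (Finset.mem_univ i)]
        simp
      rw [e]
      refine J.sub_mem hfJ (J.sum_mem fun j hj => J.mul_mem_left _ (key _ j.2 ?_))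
      intro hh
      exact (Finset.mem_erase.1 hj).1 (Subtype.ext hh)
    rw [h]
    exact (Ideal.unit_mul_mem_iff_mem J hu).1 h1
  · exact key y hy h

open IsLocalRing in
lemma regular_step {S R : Type} [CommRing S] [IsRegularLocalRing S] [CommRing R] [Nontrivial R]
    (φ : S →+* R) (hφ : Function.Surjective φ) (f : S) (hk : RingHom.ker φ = Ideal.span {f})
    (hf : f ∈ maximalIdeal S) (hf2 : f ∉ maximalIdeal S ^ 2) : IsRegularLocalRing R := by
  classical
  have : IsLocalRing R := IsLocalRing.of_surjective' φ hφ
  have : IsNoetherianRing R := isNoetherianRing_of_surjective S R φ hφ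
  apply IsRegularLocalRing.of_spanFinrank_maximalIdeal_le
  obtain ⟨s, hsc, hs⟩ := (IsNoetherian.noetherian (maximalIdeal S)).exists_span_finset_card_eq_spanFinrank
  obtain ⟨x, hx, hgen⟩ := exchange s f hs hf hf2
  have hd : ringKrullDim S ≤ ringKrullDim R + 1 := by
    have h1 := ringKrullDim_le_ringKrullDim_quotient_add_card (R := S) {f}
      (by rw [IsLocalRing.ringJacobson_eq_maximalIdeal]; simpa using hf)
    have e : (S ⧸ Ideal.span (({f} : Finset S) : Set S)) ≃+* R := by
      have : Ideal.span (({f} : Finset S) : Set S) = RingHom.ker φ := by rw [hk]; simp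
      rw [this]
      exact RingHom.quotientKerEquivOfSurjective hφ
    rw [ringKrullDim_eq_of_ringEquiv e] at h1
    simpa using h1
  have hm : maximalIdeal R ≤ Ideal.span (((s.erase x).image φ : Finset R) : Set R) := by
    intro r hr
    obtain ⟨y, rfl⟩ := hφ r
    have hy : y ∈ maximalIdeal S := by
      intro hu
      exact hr (hu.map φ)
    have h2 : y ∈ Ideal.span {f} ⊔ Ideal.span {z | z ∈ s ∧ z ≠ x} := by
      rw [← hs] at hy
      exact (Ideal.span_le.2 hgen) hy
    have h3 := Ideal.mem_map_of_mem φ h2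
    rw [Ideal.map_sup, Ideal.map_span, Ideal.map_span] at h3
    have hf0 : φ f = 0 := by
      have : f ∈ RingHom.ker φ := by rw [hk]; exact Ideal.subset_span rfl
      exact this
    simp only [Set.image_singleton, hf0, Ideal.span_singleton_eq_bot.2, bot_sup_eq] at h3
    refine Ideal.span_mono ?_ h3
    rintro _ ⟨z, ⟨hz, hne⟩, rfl⟩
    simp only [Finset.coe_image]
    exact ⟨z, by simp [hz, hne], rfl⟩
  have hm' : maximalIdeal R = Ideal.span (((s.erase x).image φ : Finset R) : Set R) := by
    refine le_antisymm hm (Ideal.span_le.2 ?_)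
    intro r hr
    simp only [Finset.coe_image] at hr
    obtain ⟨z, hz, rfl⟩ := hr
    have hzs : z ∈ maximalIdeal S := by
      rw [← hs]; exact Ideal.subset_span (Finset.mem_of_mem_erase hz)
    have : IsLocalHom φ := IsLocalHom.of_surjective φ hφ
    exact fun hu => hzs (isUnit_of_map_unit φ z hu)
  have hr : (maximalIdeal R).spanFinrank + 1 ≤ s.card := by
    have h1 := Submodule.spanFinrank_span_le_ncard_of_finite (R := R)
      (s := (((s.erase x).image φ : Finset R) : Set R)) (Finset.finite_toSet _)
    rw [Set.ncard_coe_finset] at h1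
    have h2 : ((s.erase x).image φ).card ≤ (s.erase x).card := Finset.card_image_le
    rw [Finset.card_erase_of_mem hx] at h2
    have h3 : 0 < s.card := Finset.card_pos.2 ⟨x, hx⟩
    have h4 : (maximalIdeal R).spanFinrank ≤ ((s.erase x).image φ).card := by rw [hm']; exact h1
    omega
  have hS := IsRegularLocalRing.spanFinrank_maximalIdeal (R := S)
  rw [← hsc] at hS
  rw [← hS] at hd
  have : ((((maximalIdeal R).spanFinrank + 1 : ℕ)) : WithBot ℕ∞) ≤ ringKrullDim R + 1 :=
    le_trans (by exact_mod_cast hr) hd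
  push_cast at this
  exact (WithBot.add_le_add_iff_right' WithBot.coe_ne_bot (WithBot.coe_injective.ne ENat.one_ne_top)).1 this

open IsLocalRing in
lemma regular_two {S R : Type} [CommRing S] [IsRegularLocalRing S] [CommRing R] [Nontrivial R]
    (φ : S →+* R) (hφ : Function.Surjective φ) (f g : S) (hk : RingHom.ker φ = Ideal.span {f, g})
    (hf : f ∈ maximalIdeal S) (hg : g ∈ maximalIdeal S) (hf2 : f ∉ maximalIdeal S ^ 2)
    (hg2 : g ∉ Ideal.span {f} ⊔ maximalIdeal S ^ 2) : IsRegularLocalRing R := by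
  have hfk : f ∈ RingHom.ker φ := by rw [hk]; exact Ideal.subset_span (by simp)
  have hle : Ideal.span {f} ≤ RingHom.ker φ := (Ideal.span_singleton_le_iff_mem _).2 hfk
  let π := Ideal.Quotient.mk (Ideal.span {f})
  have : Nontrivial (S ⧸ Ideal.span {f}) :=
    Ideal.Quotient.nontrivial_iff.2 (fun h => hf (by
      have : (1 : S) ∈ Ideal.span {f} := h ▸ Submodule.mem_top
      exact isUnit_of_dvd_one (Ideal.mem_span_singleton.1 this)))
  have hπ : Function.Surjective π := Ideal.Quotient.mk_surjective
  have : IsRegularLocalRing (S ⧸ Ideal.span {f}) :=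
    regular_step π hπ f (Ideal.mk_ker) hf hf2
  let ψ : S ⧸ Ideal.span {f} →+* R := Ideal.Quotient.lift _ φ hle
  have hψ : Function.Surjective ψ := Ideal.Quotient.lift_surjective_of_surjective _ _ hφ
  have hloc : IsLocalHom π := IsLocalHom.of_surjective π hπ
  have hmax : maximalIdeal (S ⧸ Ideal.span {f}) = (maximalIdeal S).map π := by
    apply le_antisymm
    · intro y hy
      obtain ⟨x, rfl⟩ := hπ y
      exact Ideal.mem_map_of_mem _ (fun hu => hy (hu.map π))
    · rw [Ideal.map_le_iff_le_comap]
      intro x hx hu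
      exact hx (isUnit_of_map_unit π x hu)
  refine regular_step ψ hψ (π g) ?_ ?_ ?_
  · ext y
    obtain ⟨x, rfl⟩ := hπ y
    have h1 : π x ∈ RingHom.ker ψ ↔ x ∈ RingHom.ker φ := by
      rw [RingHom.mem_ker, RingHom.mem_ker]
      exact Iff.rfl
    rw [h1, hk]
    have h2 : Ideal.span {π g} = (Ideal.span {g}).map π := by
      rw [Ideal.map_span, Set.image_singleton]
    rw [h2, ← Ideal.mem_comap, Ideal.comap_map_of_surjective' π hπ, Ideal.mk_ker,
      ← Ideal.span_union, Set.union_comm]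
    rfl
  · rw [hmax]; exact Ideal.mem_map_of_mem _ hg
  · intro h
    apply hg2
    rw [hmax, ← Ideal.map_pow, ← Ideal.mem_comap, Ideal.comap_map_of_surjective' π hπ,
      Ideal.mk_ker, sup_comm] at h
    exact h

open IsLocalRing in
lemma dim_bound {S R : Type} [CommRing S] [IsLocalRing S] [IsNoetherianRing S]
    [CommRing R] [IsLocalRing R]
    (φ : S →+* R) (hφ : Function.Surjective φ) (g : S) (hg : g ∈ maximalIdeal S)
    (hk : RingHom.ker φ ≤ Ideal.span {g} ⊔ maximalIdeal S ^ 2)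
    (s : Finset R) (hs : Ideal.span (s : Set R) = maximalIdeal R) :
    ringKrullDim S ≤ ((s.card + 1 : ℕ) : WithBot ℕ∞) := by
  classical
  let σ := Function.surjInv hφ
  have hσ : ∀ r, φ (σ r) = r := Function.surjInv_eq hφ
  let t : Finset S := insert g (s.image σ)
  have hloc : IsLocalHom φ := IsLocalHom.of_surjective φ hφ
  have ht : maximalIdeal S ≤ Ideal.span (t : Set S) := by
    apply Submodule.le_of_le_smul_of_le_jacobson_bot (I := maximalIdeal S)
      (IsNoetherian.noetherian _) (maximalIdeal_le_jacobson _)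
    intro y hy
    have h1 : φ y ∈ maximalIdeal R := fun hu => hy (isUnit_of_map_unit φ y hu)
    have h2 : (s : Set R) = φ '' (σ '' s) := by
      rw [← Set.image_comp]
      have : φ ∘ σ = id := funext hσ
      rw [this, Set.image_id]
    rw [← hs, h2, ← Ideal.map_span, ← Ideal.mem_comap, Ideal.comap_map_of_surjective' φ hφ] at h1
    refine (sup_le ?_ (hk.trans (sup_le ?_ ?_)) : _ ≤ _) h1
    · refine le_trans (Ideal.span_mono ?_) le_sup_left
      simp [t]
    · refine le_trans (Ideal.span_mono ?_) le_sup_left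
      simp [t]
    · rw [pow_two]; exact le_sup_right
  have ht' : maximalIdeal S = Ideal.span (t : Set S) := by
    refine le_antisymm ht (Ideal.span_le.2 ?_)
    intro x hx
    simp only [t, Finset.coe_insert, Finset.coe_image, Set.mem_insert_iff] at hx
    rcases hx with rfl | ⟨r, hr, rfl⟩
    · exact hg
    · have : r ∈ maximalIdeal R := by rw [← hs]; exact Ideal.subset_span hr
      refine fun hu => this ?_
      have := IsUnit.map φ hu
      rwa [hσ] at this
  have h1 := Submodule.spanFinrank_span_le_ncard_of_finite (R := S)
      (s := (t : Set S)) (Finset.finite_toSet _)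
  rw [Set.ncard_coe_finset] at h1
  refine (ringKrullDim_le_spanFinrank_maximalIdeal S).trans ?_
  have h2 : t.card ≤ s.card + 1 :=
    (Finset.card_insert_le _ _).trans (Nat.add_le_add_right Finset.card_image_le 1)
  have h3 : (maximalIdeal S).spanFinrank ≤ s.card + 1 := by
    rw [ht']; exact h1.trans h2
  exact_mod_cast h3

lemma height_shift {S R : Type} [CommRing S] [CommRing R] (φ : S →+* R)
    (hφ : Function.Surjective φ)
    (h2 : ∀ Q : Ideal S, Q.IsPrime → RingHom.ker φ ≤ Q → 2 ≤ Q.height) (k : ℕ) :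
    ∀ P : Ideal R, P.IsPrime → (k : ℕ∞) ≤ P.height → ((k + 2 : ℕ) : ℕ∞) ≤ (P.comap φ).height := by
  induction k with
  | zero =>
    intro P hP _
    have := h2 (P.comap φ) inferInstance (Ideal.ker_le_comap φ)
    simpa using this
  | succ k ih =>
    intro P hP hk
    have h1 : ¬ P.height ≤ k := by
      intro h
      have := hk.trans h
      norm_cast at this
      omega
    rw [Ideal.height_le_iff] at h1
    push Not at h1
    obtain ⟨q, hq, hlt, hkq⟩ := h1
    have h3 := ih q hq hkq
    have h4 : q.comap φ < P.comap φ := by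
      refine lt_of_le_of_ne (Ideal.comap_mono hlt.le) fun h => hlt.ne ?_
      exact Ideal.comap_injective_of_surjective φ hφ h
    have h5 := Ideal.height_add_one_le_of_lt_of_isPrime h4
    refine le_trans ?_ h5
    have : ((k + 1 + 2 : ℕ) : ℕ∞) = ((k + 2 : ℕ) : ℕ∞) + 1 := by push_cast; ring
    rw [this]
    gcongr

lemma regularLocal_of {S : Type} [CommRing S] [IsLocalRing S] (h : IsRegularLocalRing S) :
    IsRegularLocal S := by
  refine ⟨inferInstance, ?_⟩
  obtain ⟨s, hsc, hs⟩ := (IsNoetherian.noetherian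
    (IsLocalRing.maximalIdeal S)).exists_span_finset_card_eq_spanFinrank
  refine ⟨s, hs, ?_⟩
  rw [hsc]
  exact h.spanFinrank_maximalIdeal


lemma deriv_sq {S : Type} [CommRing S] {K : Type} [CommRing K] [Algebra K S] (D : Derivation K S S)
    (Q : Ideal S) (x : S) (hx : x ∈ Q ^ 2) : D x ∈ Q := by
  rw [pow_two] at hx
  refine Submodule.mul_induction_on hx (fun a ha b hb => ?_) (fun a b ha hb => ?_)
  · rw [Derivation.leibniz]
    exact Q.add_mem (Q.mul_mem_right _ ha) (Q.mul_mem_right _ hb)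
  · rw [map_add]; exact Q.add_mem ha hb

lemma loc_surj {S : Type} [CommRing S] (I : Ideal S) (P : Ideal (S ⧸ I)) [P.IsPrime] :
    Function.Surjective (Localization.localRingHom (P.comap (Ideal.Quotient.mk I)) P
      (Ideal.Quotient.mk I) rfl) :=
  RingHom.surjective_localRingHom_of_surjective _ Ideal.Quotient.mk_surjective P

lemma loc_ker {S : Type} [CommRing S] (I : Ideal S) (P : Ideal (S ⧸ I)) [P.IsPrime] :
    RingHom.ker (Localization.localRingHom (P.comap (Ideal.Quotient.mk I)) P
      (Ideal.Quotient.mk I) rfl) =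
      I.map (algebraMap S (Localization.AtPrime (P.comap (Ideal.Quotient.mk I)))) := by
  have h := IsLocalization.ker_map (M := (P.comap (Ideal.Quotient.mk I)).primeCompl)
    (S := Localization.AtPrime (P.comap (Ideal.Quotient.mk I)))
    (Localization.AtPrime P) (Ideal.Quotient.mk I)
    (Ideal.map_primeCompl_comap_of_surjective _ Ideal.Quotient.mk_surjective P)
  rw [Ideal.mk_ker] at h
  exact h

/-- Jacobian criterion, triangular form in codimension two. -/
lemma jac_regular {K S : Type} [CommRing K] [CommRing S] [Algebra K S] [IsRegularRing S]
    (I : Ideal S) (P : Ideal (S ⧸ I)) [P.IsPrime] (f g s : S) (hf : f ∈ I) (hg : g ∈ I)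
    (hs : s ∉ P.comap (Ideal.Quotient.mk I)) (hI : ∀ x ∈ I, s * x ∈ Ideal.span {f, g})
    (D₁ D₂ : Derivation K S S)
    (h1 : D₁ f ∉ P.comap (Ideal.Quotient.mk I)) (h2 : D₂ f ∈ P.comap (Ideal.Quotient.mk I))
    (h3 : D₂ g ∉ P.comap (Ideal.Quotient.mk I)) :
    IsRegularLocal (Localization.AtPrime P) := by
  set Q := P.comap (Ideal.Quotient.mk I) with hQ
  have hIQ : I ≤ Q := by
    have := Ideal.ker_le_comap (K := P) (Ideal.Quotient.mk I)
    rwa [Ideal.mk_ker] at this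
  have hmax : IsLocalRing.maximalIdeal (Localization.AtPrime Q) =
    Q.map (algebraMap S (Localization.AtPrime Q)) := (Localization.AtPrime.map_eq_maximalIdeal).symm
  have hmem : ∀ (J : Ideal S) (x : S), algebraMap S (Localization.AtPrime Q) x ∈
      J.map (algebraMap S (Localization.AtPrime Q)) → ∃ u ∉ Q, u * x ∈ J := by
    intro J x hx
    obtain ⟨u, hu, hux⟩ := (IsLocalization.algebraMap_mem_map_algebraMap_iff Q.primeCompl _ J x).1 hx
    exact ⟨u, hu, hux⟩
  have hpr : Q.IsPrime := inferInstance
  apply regularLocal_of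
  refine regular_two _ (loc_surj I P) (algebraMap _ _ f) (algebraMap _ _ g) ?_ ?_ ?_ ?_ ?_
  · rw [loc_ker]
    apply le_antisymm
    · rw [Ideal.map_le_iff_le_comap]
      intro x hx
      rw [Ideal.mem_comap]
      have hx2 := Ideal.mem_map_of_mem (algebraMap S (Localization.AtPrime Q)) (hI x hx)
      rw [Ideal.map_span, Set.image_pair, map_mul] at hx2
      exact (Ideal.unit_mul_mem_iff_mem _
        (IsLocalization.map_units (M := Q.primeCompl) (Localization.AtPrime Q) ⟨s, hs⟩)).1 hx2
    · rw [Ideal.span_le]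
      rintro x (rfl | rfl)
      · exact Ideal.mem_map_of_mem _ hf
      · exact Ideal.mem_map_of_mem _ hg
  · rw [hmax]; exact Ideal.mem_map_of_mem _ (hIQ hf)
  · rw [hmax]; exact Ideal.mem_map_of_mem _ (hIQ hg)
  · rw [hmax, ← Ideal.map_pow]
    intro h
    obtain ⟨u, hu, hux⟩ := hmem _ _ h
    have := deriv_sq D₁ Q _ hux
    rw [Derivation.leibniz, smul_eq_mul, smul_eq_mul] at this
    have h5 := (Q.add_mem_iff_left (Q.mul_mem_right _ (hIQ hf))).1 this
    exact (hpr.mem_or_mem h5).elim hu h1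
  · rw [hmax, ← Ideal.map_pow, ← Set.image_singleton, ← Ideal.map_span, ← Ideal.map_sup]
    intro h
    obtain ⟨u, hu, hux⟩ := hmem _ _ h
    obtain ⟨y, hy, q, hq, e⟩ := Submodule.mem_sup.1 hux
    obtain ⟨α, rfl⟩ := Ideal.mem_span_singleton'.1 hy
    have h6 := congrArg D₂ e
    rw [map_add, Derivation.leibniz, Derivation.leibniz] at h6
    simp only [smul_eq_mul] at h6
    have h7 : u * D₂ g + g * D₂ u ∈ Q := by
      rw [← h6]
      exact Q.add_mem (Q.add_mem (Q.mul_mem_left _ h2) (Q.mul_mem_right _ (hIQ hf)))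
        (deriv_sq D₂ Q _ hq)
    have h5 := (Q.add_mem_iff_left (Q.mul_mem_right _ (hIQ hg))).1 h7
    exact (hpr.mem_or_mem h5).elim hu h3

lemma not_regular {S : Type} [CommRing S] [IsNoetherianRing S]
    (I : Ideal S) (P : Ideal (S ⧸ I)) [P.IsPrime]
    (hht : ∀ Q : Ideal S, Q.IsPrime → I ≤ Q → 2 ≤ Q.height) (g : S)
    (hg : g ∈ P.comap (Ideal.Quotient.mk I))
    (hI : I ≤ Ideal.span {g} ⊔ (P.comap (Ideal.Quotient.mk I)) ^ 2) :
    ¬ IsRegularLocal (Localization.AtPrime P) := by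
  rintro ⟨-, s, hs, hcard⟩
  set Q := P.comap (Ideal.Quotient.mk I) with hQ
  have hmax : IsLocalRing.maximalIdeal (Localization.AtPrime Q) =
    Q.map (algebraMap S (Localization.AtPrime Q)) := (Localization.AtPrime.map_eq_maximalIdeal).symm
  have h1 := dim_bound _ (loc_surj I P) (algebraMap _ _ g)
    (by rw [hmax]; exact Ideal.mem_map_of_mem _ hg)
    (by
      rw [loc_ker, hmax, ← Ideal.map_pow, ← Set.image_singleton, ← Ideal.map_span, ← Ideal.map_sup]
      exact Ideal.map_mono hI) s hs
  rw [IsLocalization.AtPrime.ringKrullDim_eq_height Q] at h1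
  rw [IsLocalization.AtPrime.ringKrullDim_eq_height P] at hcard
  have h2 : (s.card : ℕ∞) = P.height := WithBot.coe_injective hcard
  have h3 := height_shift (Ideal.Quotient.mk I) Ideal.Quotient.mk_surjective
    (fun Q hq h => hht Q hq (by rwa [Ideal.mk_ker] at h)) s.card P inferInstance h2.le
  have h4 : Q.height ≤ ((s.card + 1 : ℕ) : ℕ∞) := by exact_mod_cast h1
  have h5 := h3.trans h4
  norm_cast at h5
  omega

lemma two_le_height {K : Type} [Field K] (m n : ℕ) (Q : Ideal (MvPolynomial (Fin 5) K))
    [hQ : Q.IsPrime]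
    (h1 : (X 0 ^ 2) * (X 0 ^ 2 + X 4 ^ m) - X 1 * X 2 ∈ Q)
    (h3 : X 1 * (X 1 ^ n - X 3) - (X 0 ^ 2) * X 3 ∈ Q) : 2 ≤ Q.height := by
  suffices h : ∃ g : MvPolynomial (Fin 5) K, Prime g ∧ g ∈ Q ∧ ∃ x ∈ Q, ¬ g ∣ x by
    obtain ⟨g, hg, hgQ, x, hx, hgx⟩ := h
    have hp : (Ideal.span {g}).IsPrime := (Ideal.span_singleton_prime hg.ne_zero).2 hg
    have hb : (⊥ : Ideal (MvPolynomial (Fin 5) K)).IsPrime := Ideal.isPrime_bot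
    have l1 : ⊥ < Ideal.span {g} :=
      bot_lt_iff_ne_bot.2 (by simpa [Ideal.span_singleton_eq_bot] using hg.ne_zero)
    have l2 : Ideal.span {g} < Q := by
      refine lt_of_le_of_ne ((Ideal.span_singleton_le_iff_mem _).2 hgQ) fun h => hgx ?_
      rw [← h] at hx
      exact Ideal.mem_span_singleton.1 hx
    have a1 := Ideal.height_add_one_le_of_lt_of_isPrime l1
    have a2 := Ideal.height_add_one_le_of_lt_of_isPrime l2
    have a3 : (1 : ℕ∞) ≤ (Ideal.span {g}).height := le_trans le_add_self a1
    refine le_trans ?_ a2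
    calc (2 : ℕ∞) = 1 + 1 := by norm_num
      _ ≤ _ := by gcongr
  by_cases hB : (X 1 : MvPolynomial (Fin 5) K) ∈ Q
  · refine ⟨X 1, X_prime, hB, (X 0 ^ 2) * (X 0 ^ 2 + X 4 ^ m), ?_, ?_⟩
    · exact (Q.sub_mem_iff_left (Q.mul_mem_right _ hB)).1 h1
    · rintro ⟨y, hy⟩
      have e := congrArg (aeval (fun i : Fin 5 => if i = 0 then (Polynomial.X : Polynomial K)
        else if i = 1 then 0 else 1)) hy
      simp at e
      have := congrArg (Polynomial.eval 0) e
      simp at this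
  · set f3 : MvPolynomial (Fin 5) K := X 1 * (X 1 ^ n - X 3) - (X 0 ^ 2) * X 3 with hf3
    have hne : f3 ≠ 0 := by
      intro h
      have e := congrArg (eval (fun i : Fin 5 => if i = 1 then (0 : K) else 1)) h
      simp [hf3] at e
    have hprod : ∃ g, Prime g ∧ g ∈ Q ∧ g ∣ f3 := by
      obtain ⟨F, hF, u, hu⟩ := UniqueFactorizationMonoid.exists_prime_factors f3 hne
      have hFQ : F.prod ∈ Q := by
        have : F.prod * u ∈ Q := by rw [hu]; exact h3
        exact (Ideal.mul_unit_mem_iff_mem Q u.isUnit).1 this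
      obtain ⟨g, hgF, hgQ⟩ := (hQ.multiset_prod_mem_iff_exists_mem F).1 hFQ
      exact ⟨g, hF g hgF, hgQ, (Multiset.dvd_prod hgF).trans ⟨u, hu.symm⟩⟩
    obtain ⟨g, hg, hgQ, hgf⟩ := hprod
    refine ⟨g, hg, hgQ, _, h1, fun hdvd => hB ?_⟩
    have hdeg : degreeOf 2 f3 = 0 := by
      have e1 : ∀ i : Fin 5, i ≠ 2 → degreeOf 2 (X i : MvPolynomial (Fin 5) K) = 0 :=
        fun i hi => degreeOf_X_of_ne hi.symm
      have e2 : ∀ (i : Fin 5) (k : ℕ), i ≠ 2 →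
          degreeOf 2 (X i ^ k : MvPolynomial (Fin 5) K) = 0 := fun i k hi => by
        have := degreeOf_pow_le 2 (X i : MvPolynomial (Fin 5) K) k
        rw [e1 i hi] at this
        omega
      have a1 := degreeOf_sub_le 2 (X 1 * (X 1 ^ n - X 3) : MvPolynomial (Fin 5) K) ((X 0 ^ 2) * X 3)
      have a2 := degreeOf_mul_le 2 (X 1 : MvPolynomial (Fin 5) K) (X 1 ^ n - X 3)
      have a3 := degreeOf_mul_le 2 (X 0 ^ 2 : MvPolynomial (Fin 5) K) (X 3)
      have a4 := degreeOf_sub_le 2 (X 1 ^ n : MvPolynomial (Fin 5) K) (X 3)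
      rw [e1 1 (by decide)] at a2
      rw [e1 3 (by decide), e2 0 2 (by decide)] at a3
      rw [e1 3 (by decide), e2 1 n (by decide)] at a4
      simp only [← hf3] at a1
      omega
    have hg2 : degreeOf 2 g = 0 := by
      obtain ⟨y, hy⟩ := hgf
      have : y ≠ 0 := by rintro rfl; simp at hy; exact hne hy
      rw [hy, degreeOf_mul_eq hg.ne_zero this] at hdeg
      omega
    let τ : MvPolynomial (Fin 5) K →+* MvPolynomial (Fin 5) K :=
      (aeval (fun i : Fin 5 => if i = 2 then X 2 + 1 else X i) :
        MvPolynomial (Fin 5) K →ₐ[K] MvPolynomial (Fin 5) K).toRingHom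
    have hτg : τ g = g := by
      have := hom_congr_vars (f₁ := τ) (f₂ := RingHom.id _) (p₁ := g) (p₂ := g) ?_ ?_ rfl
      · simpa using this
      · ext x; simp [τ]
      · intro i hi _
        have : i ≠ 2 := by
          rintro rfl
          classical
          rw [degreeOf_def, Multiset.count_eq_zero] at hg2
          rw [vars_def, Multiset.mem_toFinset] at hi
          exact hg2 hi
        simp [τ, this]
    have hd2 : g ∣ τ ((X 0 ^ 2) * (X 0 ^ 2 + X 4 ^ m) - X 1 * X 2) := by
      have := map_dvd τ hdvd
      rwa [hτg] at this
    have hd3 := dvd_sub hdvd hd2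
    have e : ((X 0 ^ 2) * (X 0 ^ 2 + X 4 ^ m) - X 1 * X 2) -
        τ ((X 0 ^ 2) * (X 0 ^ 2 + X 4 ^ m) - X 1 * X 2) = X 1 := by
      simp [τ]; ring
    rw [e] at hd3
    exact Q.mem_of_dvd hd3 hgQ

set_option maxHeartbeats 1000000 in
/-- the singular locus of Spec R, R = K[A,B,C,D,T]/I
(variables 0=A, 1=B, 2=C, 3=D, 4=T, char K = p > 2), is V(a, b, c(c+tᵐ), d):
a prime P fails to give a regular local ring R_P exactly when P ⊇ (a, b, c(c+tᵐ), d). -/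
theorem stmt12 (K : Type) [Field K] (p : ℕ) [Fact p.Prime] [CharP K p] (hp : 2 < p)
    (m n : ℕ) (hm : 0 < m) (hn : 0 < n)
    (I : Ideal (MvPolynomial (Fin 5) K))
    (hI : I = Ideal.span
      { (X 0 ^ 2) * (X 0 ^ 2 + X 4 ^ m) - X 1 * X 2,
        (X 0 ^ 2 + X 4 ^ m) * (X 1 ^ n - X 3) - X 2 * X 3,
        X 1 * (X 1 ^ n - X 3) - (X 0 ^ 2) * X 3 })
    (a b c d t : MvPolynomial (Fin 5) K ⧸ I)
    (ha : a = Ideal.Quotient.mk I (X 0)) (hb : b = Ideal.Quotient.mk I (X 1))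
    (hc : c = Ideal.Quotient.mk I (X 2)) (hd : d = Ideal.Quotient.mk I (X 3))
    (ht : t = Ideal.Quotient.mk I (X 4)) :
    ∀ (P : Ideal (MvPolynomial (Fin 5) K ⧸ I)) [P.IsPrime],
      (¬ IsRegularLocal (Localization.AtPrime P) ↔
        Ideal.span {a, b, c * (c + t ^ m), d} ≤ P) := by
  intro P hP
  have hht : ∀ Q : Ideal (MvPolynomial (Fin 5) K), Q.IsPrime → I ≤ Q → 2 ≤ Q.height := by
    intro Q hQ hIQ
    refine two_le_height m n Q (hIQ ?_) (hIQ ?_) <;> rw [hI] <;> apply Ideal.subset_span <;> simp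
  have hreg : IsRegularRing (MvPolynomial (Fin 5) K) := inferInstance
  have hIQ : I ≤ P.comap (Ideal.Quotient.mk I) := by
    have := Ideal.ker_le_comap (K := P) (Ideal.Quotient.mk I)
    rwa [Ideal.mk_ker] at this
  have hQp : (P.comap (Ideal.Quotient.mk I)).IsPrime := inferInstance
  have hjac := jac_regular (K := K) I P
  have hnot := not_regular I P hht
  have hJ : Ideal.span {a, b, c * (c + t ^ m), d} ≤ P ↔
      X 0 ∈ P.comap (Ideal.Quotient.mk I) ∧ X 1 ∈ P.comap (Ideal.Quotient.mk I) ∧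
      X 2 * (X 2 + X 4 ^ m) ∈ P.comap (Ideal.Quotient.mk I) ∧
      X 3 ∈ P.comap (Ideal.Quotient.mk I) := by
    rw [Ideal.span_le]
    simp only [Set.insert_subset_iff, Set.singleton_subset_iff, SetLike.mem_coe, Ideal.mem_comap,
      map_mul, map_add, map_pow, ha, hb, hc, hd, ht]
  rw [hJ]
  generalize P.comap (Ideal.Quotient.mk I) = Q at *
  have h2 : (2 : MvPolynomial (Fin 5) K) ∉ Q := by
    intro h
    have hk : (2 : K) ≠ 0 := by
      intro h0
      have := (CharP.cast_eq_zero_iff K p 2).1 (by exact_mod_cast h0)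
      exact absurd (Nat.le_of_dvd (by norm_num) this) (by omega)
    apply hQp.ne_top
    refine Ideal.eq_top_of_isUnit_mem _ h ?_
    have : (2 : MvPolynomial (Fin 5) K) = C 2 := (map_ofNat C 2).symm
    rw [this]
    exact (IsUnit.mk0 _ hk).map C
  set f1 : MvPolynomial (Fin 5) K := (X 0 ^ 2) * (X 0 ^ 2 + X 4 ^ m) - X 1 * X 2 with hf1
  set f2 : MvPolynomial (Fin 5) K := (X 0 ^ 2 + X 4 ^ m) * (X 1 ^ n - X 3) - X 2 * X 3 with hf2
  set f3 : MvPolynomial (Fin 5) K := X 1 * (X 1 ^ n - X 3) - (X 0 ^ 2) * X 3 with hf3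
  have m1 : f1 ∈ I := by rw [hI]; apply Ideal.subset_span; simp
  have m2 : f2 ∈ I := by rw [hI]; apply Ideal.subset_span; simp
  have m3 : f3 ∈ I := by rw [hI]; apply Ideal.subset_span; simp
  have hspan : ∀ (s : MvPolynomial (Fin 5) K) (J : Ideal (MvPolynomial (Fin 5) K)),
      s * f1 ∈ J → s * f2 ∈ J → s * f3 ∈ J → ∀ x ∈ I, s * x ∈ J := by
    intro s J h1 h2 h3 x hx
    rw [hI] at hx
    refine Submodule.span_induction (p := fun x _ => s * x ∈ J) ?_ ?_ ?_ ?_ hx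
    · rintro x (rfl | rfl | rfl)
      · exact h1
      · exact h2
      · exact h3
    · simp
    · intro x y _ _ hx hy
      rw [mul_add]; exact J.add_mem hx hy
    · intro r x _ hx
      rw [smul_eq_mul, mul_left_comm]; exact J.mul_mem_left _ hx
  obtain ⟨k, rfl⟩ : ∃ k, n = k + 1 := ⟨n - 1, by omega⟩
  have hE : X 1 ∈ Q → ((X 1 ^ (k + 1) - X 3 : MvPolynomial (Fin 5) K) ∈ Q ↔ X 3 ∈ Q) := by
    intro h
    exact Q.sub_mem_iff_right (Q.pow_mem_of_mem h _ (by omega))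
  constructor
  · -- contrapositive: outside the closed set, the Jacobian has rank two
    intro hsing
    by_contra hnJ
    apply hsing
    by_cases hB : X 1 ∈ Q
    swap
    · refine hjac f1 f3 (X 1) m1 m3 hB (hspan _ _ ?_ ?_ ?_) (pderiv 2) (pderiv 3) ?_ ?_ ?_
      · exact Ideal.mul_mem_left _ _ (Ideal.subset_span (by simp))
      · refine Ideal.mem_span_pair.2 ⟨X 3, X 0 ^ 2 + X 4 ^ m, ?_⟩
        simp only [hf1, hf2, hf3]; ring
      · exact Ideal.mul_mem_left _ _ (Ideal.subset_span (by simp))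
      · have e : pderiv 2 f1 = - X 1 := by
          simp [hf1, pderiv_X]
        rw [e, Q.neg_mem_iff]; exact hB
      · have e : pderiv 3 f1 = 0 := by
          simp [hf1, pderiv_X]
        rw [e]; exact Q.zero_mem
      · have e : pderiv 3 f3 = - (X 1 + X 0 ^ 2) := by
          simp [hf3, pderiv_X]; ring
        rw [e, Q.neg_mem_iff]
        intro h
        apply hB
        have h5 : X 1 ^ (k + 2) ∈ Q := by
          have e : (X 1 ^ (k + 2) : MvPolynomial (Fin 5) K) = f3 + X 3 * (X 1 + X 0 ^ 2) := by
            simp only [hf3]; ring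
          rw [e]
          exact Q.add_mem (hIQ m3) (Q.mul_mem_left _ h)
        exact hQp.mem_of_pow_mem _ h5
    by_cases hD : X 3 ∈ Q
    swap
    · refine hjac f3 f2 (X 3) m3 m2 hD (hspan _ _ ?_ ?_ ?_) (pderiv 1) (pderiv 2) ?_ ?_ ?_
      · refine Ideal.mem_span_pair.2 ⟨-(X 0 ^ 2 + X 4 ^ m), X 1, ?_⟩
        simp only [hf1, hf2, hf3]; ring
      · exact Ideal.mul_mem_left _ _ (Ideal.subset_span (by simp))
      · exact Ideal.mul_mem_left _ _ (Ideal.subset_span (by simp))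
      · have e : pderiv 1 f3 = (X 1 ^ (k + 1) - X 3) + X 1 * (((k : MvPolynomial (Fin 5) K) + 1) * X 1 ^ k) := by
          simp [hf3, pderiv_X]; ring
        rw [e, Q.add_mem_iff_left (Q.mul_mem_right _ hB), hE hB]
        exact hD
      · have e : pderiv 2 f3 = 0 := by
          simp [hf3, pderiv_X]
        rw [e]; exact Q.zero_mem
      · have e : pderiv 2 f2 = - X 3 := by
          simp [hf2, pderiv_X]
        rw [e, Q.neg_mem_iff]; exact hD
    by_cases hA : X 0 ∈ Q
    swap
    · have hU : X 0 ^ 2 + X 4 ^ m ∈ Q := by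
        have : (X 0 ^ 2) * (X 0 ^ 2 + X 4 ^ m) ∈ Q :=
          (Q.sub_mem_iff_left (Q.mul_mem_right _ hB)).1 (hIQ m1)
        exact (hQp.mem_or_mem this).resolve_left fun h => hA (hQp.mem_of_pow_mem _ h)
      refine hjac f1 f3 (X 0 ^ 2) m1 m3 (fun h => hA (hQp.mem_of_pow_mem _ h))
        (hspan _ _ ?_ ?_ ?_) (pderiv 0) (pderiv 3) ?_ ?_ ?_
      · exact Ideal.mul_mem_left _ _ (Ideal.subset_span (by simp))
      · refine Ideal.mem_span_pair.2 ⟨X 1 ^ (k + 1) - X 3, X 2, ?_⟩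
        simp only [hf1, hf2, hf3]; ring
      · exact Ideal.mul_mem_left _ _ (Ideal.subset_span (by simp))
      · have e : pderiv 0 f1 = 2 * X 0 * (X 0 ^ 2 + X 4 ^ m) + 2 * X 0 ^ 3 := by
          simp [hf1, pderiv_X]; ring
        rw [e, Q.add_mem_iff_right (Q.mul_mem_left _ hU)]
        intro h
        rcases hQp.mem_or_mem h with h | h
        · exact h2 h
        · exact hA (hQp.mem_of_pow_mem _ h)
      · have e : pderiv 3 f1 = 0 := by
          simp [hf1, pderiv_X]
        rw [e]; exact Q.zero_mem
      · have e : pderiv 3 f3 = - (X 1 + X 0 ^ 2) := by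
          simp [hf3, pderiv_X]; ring
        rw [e, Q.neg_mem_iff, Q.add_mem_iff_right hB]
        exact fun h => hA (hQp.mem_of_pow_mem _ h)
    have hC : X 2 * (X 2 + X 4 ^ m) ∉ Q := fun h => hnJ ⟨hA, hB, h, hD⟩
    have hC1 : X 2 ∉ Q := fun h => hC (Q.mul_mem_right _ h)
    have hC2 : X 2 + X 4 ^ m ∉ Q := fun h => hC (Q.mul_mem_left _ h)
    refine hjac f1 f2 (X 2) m1 m2 hC1 (hspan _ _ ?_ ?_ ?_) (pderiv 1) (pderiv 3) ?_ ?_ ?_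
    · exact Ideal.mul_mem_left _ _ (Ideal.subset_span (by simp))
    · exact Ideal.mul_mem_left _ _ (Ideal.subset_span (by simp))
    · refine Ideal.mem_span_pair.2 ⟨-(X 1 ^ (k + 1) - X 3), X 0 ^ 2, ?_⟩
      simp only [hf1, hf2, hf3]; ring
    · have e : pderiv 1 f1 = - X 2 := by
        simp [hf1, pderiv_X]
      rw [e, Q.neg_mem_iff]; exact hC1
    · have e : pderiv 3 f1 = 0 := by
        simp [hf1, pderiv_X]
      rw [e]; exact Q.zero_mem
    · have e : pderiv 3 f2 = - (X 0 ^ 2 + (X 2 + X 4 ^ m)) := by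
        simp [hf2, pderiv_X]; ring
      rw [e, Q.neg_mem_iff, Q.add_mem_iff_right (Q.pow_mem_of_mem hA 2 (by norm_num))]
      exact hC2
  · rintro ⟨hA, hB, hC, hD⟩
    have hEQ := (hE hB).2 hD
    have hA2 : (X 0 ^ 2 : MvPolynomial (Fin 5) K) ∈ Q ^ 2 := Ideal.pow_mem_pow hA 2
    have hmm : ∀ x y, x ∈ Q → y ∈ Q → x * y ∈ Q ^ 2 := fun x y hx hy => by
      rw [pow_two]; exact Ideal.mul_mem_mul hx hy
    have hle : ∀ g, f1 ∈ Ideal.span {g} ⊔ Q ^ 2 → f2 ∈ Ideal.span {g} ⊔ Q ^ 2 →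
        I ≤ Ideal.span {g} ⊔ Q ^ 2 := by
      intro g h1 h2
      rw [hI, Ideal.span_le]
      rintro x (rfl | rfl | rfl)
      · exact h1
      · exact h2
      · refine Ideal.mem_sup_right ?_
        exact (Q ^ 2).sub_mem (hmm _ _ hB hEQ) (Ideal.mul_mem_right _ (Q ^ 2) hA2)
    rcases hQp.mem_or_mem hC with hC | hC
    · refine hnot f2 (hIQ m2) (hle _ ?_ ?_)
      · refine Ideal.mem_sup_right ?_
        rw [hf1]
        exact (Q ^ 2).sub_mem (Ideal.mul_mem_right _ (Q ^ 2) hA2) (hmm _ _ hB hC)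
      · exact Ideal.mem_sup_left (Ideal.mem_span_singleton_self f2)
    · refine hnot (X 1) hB (hle _ ?_ ?_)
      · have hX : (X 1 : MvPolynomial (Fin 5) K) ∈ Ideal.span {(X 1 : MvPolynomial (Fin 5) K)} ⊔ Q ^ 2 :=
          Ideal.mem_sup_left (Ideal.mem_span_singleton_self _)
        rw [hf1]
        exact Ideal.sub_mem _ (Ideal.mem_sup_right (Ideal.mul_mem_right _ (Q ^ 2) hA2))
          (Ideal.mul_mem_right _ _ hX)
      · have hX : (X 1 : MvPolynomial (Fin 5) K) ∈ Ideal.span {(X 1 : MvPolynomial (Fin 5) K)} ⊔ Q ^ 2 :=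
          Ideal.mem_sup_left (Ideal.mem_span_singleton_self _)
        have e : f2 = (X 0 ^ 2) * (X 1 ^ (k + 1) - X 3) + X 4 ^ m * X 1 ^ k * X 1
            - (X 2 + X 4 ^ m) * X 3 := by
          simp only [hf2]; ring
        rw [e]
        refine Ideal.sub_mem _ (Ideal.add_mem _ ?_ (Ideal.mul_mem_left _ _ hX)) ?_
        · exact Ideal.mem_sup_right (Ideal.mul_mem_right _ (Q ^ 2) hA2)
        · exact Ideal.mem_sup_right (hmm _ _ hC hD)
end

section
/- Let K be a field of characteristic p > 2 and n ≥ 1. The graded hypersurface H = K[A,X,Y]/(A² - XY(X^n - Y)), with deg A = 2n+1, deg X = 2, deg Y = 2n, is a normal integral domain. -/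
open MvPolynomial

namespace Stmt15Aux

lemma squarefree_f (K : Type) [Field K] (n : ℕ) (hn : 0 < n) :
    Squarefree (X 0 * X 1 * (X 0 ^ n - X 1) : MvPolynomial (Fin 2) K) := by
  have h0 : Prime (X 0 : MvPolynomial (Fin 2) K) := X_prime
  have h1 : Prime (X 1 : MvPolynomial (Fin 2) K) := X_prime
  let g : MvPolynomial (Fin 2) K →ₐ[K] MvPolynomial (Fin 2) K :=
    aeval ![X 0, X 0 ^ n - X 1]
  have hgg : g.comp g = AlgHom.id K _ := by
    apply MvPolynomial.algHom_ext
    intro i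
    fin_cases i <;> simp [g]
  let e : MvPolynomial (Fin 2) K ≃ₐ[K] MvPolynomial (Fin 2) K := AlgEquiv.ofAlgHom g g hgg hgg
  have h2 : Prime (X 0 ^ n - X 1 : MvPolynomial (Fin 2) K) := by
    have : e (X 1) = X 0 ^ n - X 1 := by simp [e, g]
    rw [← this]
    exact (MulEquiv.prime_iff e.toMulEquiv).2 h1
  have h01 : ¬ (X 0 : MvPolynomial (Fin 2) K) ∣ X 1 := by
    rw [X_dvd_X]; simp
  have h10 : ¬ (X 1 : MvPolynomial (Fin 2) K) ∣ X 0 := by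
    rw [X_dvd_X]; simp
  have h02 : ¬ (X 0 : MvPolynomial (Fin 2) K) ∣ X 0 ^ n - X 1 := fun h =>
    h01 ((dvd_sub_right (dvd_pow_self _ hn.ne')).1 h)
  have h12 : ¬ (X 1 : MvPolynomial (Fin 2) K) ∣ X 0 ^ n - X 1 := fun h =>
    h10 (h1.dvd_of_dvd_pow ((dvd_sub_left (dvd_refl _)).1 h))
  refine squarefree_mul_iff.2 ⟨IsRelPrime.mul_left ?_ ?_, squarefree_mul_iff.2 ⟨?_, ?_, ?_⟩, ?_⟩
  · exact h0.irreducible.isRelPrime_iff_not_dvd.2 h02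
  · exact h1.irreducible.isRelPrime_iff_not_dvd.2 h12
  · exact h0.irreducible.isRelPrime_iff_not_dvd.2 h01
  · exact h0.irreducible.squarefree
  · exact h1.irreducible.squarefree
  · exact h2.irreducible.squarefree

/-- A rational function `y` with `y ^ 2 * f` in the UFD `R`, `f` squarefree, lies in `R`. -/
lemma mem_of_sq_mul {R : Type} [CommRing R] [IsDomain R] [UniqueFactorizationMonoid R] (f : R)
    (hf : Squarefree f) (y : FractionRing R) (c : R)
    (h : y ^ 2 * algebraMap R _ f = algebraMap R _ c) : ∃ b, algebraMap R (FractionRing R) b = y := by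
  obtain ⟨b, d, hbd, rfl⟩ := IsFractionRing.exists_reduced_fraction (A := R) y
  have hd0 : (d : R) ≠ 0 := nonZeroDivisors.ne_zero d.2
  have hd : algebraMap R (FractionRing R) d ≠ 0 := by simpa using hd0
  have key : b ^ 2 * f = d ^ 2 * c := by
    apply IsFractionRing.injective R (FractionRing R)
    rw [IsFractionRing.mk'_eq_div] at h
    field_simp at h
    simpa [mul_comm] using h
  have h2 : (d : R) ^ 2 ∣ f := by
    have : IsRelPrime ((d : R) ^ 2) (b ^ 2) := (IsRelPrime.pow hbd).symm
    exact this.dvd_of_dvd_mul_left ⟨c, key⟩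
  have hu : IsUnit (d : R) := hf _ (by simpa [sq] using h2)
  obtain ⟨u, hu⟩ := hu
  refine ⟨b * ↑u⁻¹, ?_⟩
  rw [IsFractionRing.mk'_eq_div, eq_div_iff hd, ← hu, ← map_mul]
  simp [mul_assoc]

theorem main {R : Type} [CommRing R] [IsDomain R] [UniqueFactorizationMonoid R] (f : R)
    (hf : Squarefree f) (hfu : ¬ IsUnit f) (h2 : IsUnit (2 : R)) :
    IsDomain (Polynomial R ⧸ Ideal.span {(Polynomial.X ^ 2 - Polynomial.C f : Polynomial R)}) ∧
    IsIntegrallyClosed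
      (Polynomial R ⧸ Ideal.span {(Polynomial.X ^ 2 - Polynomial.C f : Polynomial R)}) := by
  let F := FractionRing R
  let f' : F := algebraMap R F f
  have hinj : Function.Injective (algebraMap R F) := IsFractionRing.injective R F
  haveI : Fact (∀ r : F, r ^ 2 ≠ f' + 0 * r) := ⟨by
    intro r hr
    rw [zero_mul, add_zero] at hr
    obtain ⟨s, rfl⟩ : ∃ s, algebraMap R F s = r := IsIntegrallyClosed.exists_algebraMap_eq_of_isIntegral_pow
      (n := 2) (by norm_num) (by rw [hr]; exact isIntegral_algebraMap)
    have hs : s ^ 2 = f := hinj (by rw [map_pow, hr])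
    have : IsUnit s := hf s (by rw [← hs, sq])
    exact hfu (hs ▸ this.pow 2)⟩
  let L := QuadraticAlgebra F f' 0
  let φ : Polynomial R →ₐ[R] L := Polynomial.aeval (QuadraticAlgebra.omega : L)
  have hω : (QuadraticAlgebra.omega : L) ^ 2 = algebraMap R L f := by
    rw [sq, QuadraticAlgebra.omega_mul_omega_eq_mk]; rfl
  have hlin : ∀ a b : R, φ (Polynomial.C b * Polynomial.X + Polynomial.C a)
      = ⟨algebraMap R F a, algebraMap R F b⟩ := by
    intro a b
    have h : ∀ r : R, algebraMap R L r = ⟨algebraMap R F r, 0⟩ := fun r => rfl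
    simp only [φ, map_add, map_mul, Polynomial.aeval_C, Polynomial.aeval_X, h]
    change ((⟨algebraMap R F b, 0⟩ : QuadraticAlgebra F f' 0) * QuadraticAlgebra.omega
      + ⟨algebraMap R F a, 0⟩) = ⟨algebraMap R F a, algebraMap R F b⟩
    ext <;> simp
  have hmonic : (Polynomial.X ^ 2 - Polynomial.C f : Polynomial R).Monic :=
    Polynomial.monic_X_pow_sub_C f two_ne_zero
  have hφf : φ (Polynomial.X ^ 2 - Polynomial.C f) = 0 := by
    simp [φ, hω]
  have hker : RingHom.ker φ.toRingHom = Ideal.span {(Polynomial.X ^ 2 - Polynomial.C f : Polynomial R)} := by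
    apply le_antisymm
    · intro q hq
      have hq : φ q = 0 := hq
      rw [Ideal.mem_span_singleton, ← Polynomial.modByMonic_eq_zero_iff_dvd hmonic]
      set r := q %ₘ (Polynomial.X ^ 2 - Polynomial.C f) with hr
      have hdeg : r.degree ≤ 1 := by
        have := Polynomial.degree_modByMonic_lt q hmonic
        rw [Polynomial.degree_X_pow_sub_C (by norm_num)] at this
        exact Order.le_of_lt_succ this
      have hφr : φ r = 0 := by
        have h := Polynomial.modByMonic_add_div q (Polynomial.X ^ 2 - Polynomial.C f)
        rw [← h, map_add, map_mul, hφf, zero_mul, add_zero] at hq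
        exact hq
      rw [Polynomial.eq_X_add_C_of_degree_le_one hdeg, hlin] at hφr
      have ha := congrArg QuadraticAlgebra.re hφr
      have hb := congrArg QuadraticAlgebra.im hφr
      simp only [QuadraticAlgebra.re_zero, QuadraticAlgebra.im_zero] at ha hb
      rw [map_eq_zero_iff _ hinj] at ha hb
      rw [Polynomial.eq_X_add_C_of_degree_le_one hdeg, ha, hb]
      simp
    · rw [Ideal.span_singleton_le_iff_mem]
      exact hφf
  have hrange : φ.range = integralClosure R L := by
    apply le_antisymm
    · rintro _ ⟨q, rfl⟩
      have hωi : IsIntegral R (QuadraticAlgebra.omega : L) :=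
        IsIntegral.of_pow (n := 2) (by norm_num) (by rw [hω]; exact isIntegral_algebraMap)
      change IsIntegral R (φ q)
      simp only [φ, Polynomial.aeval_eq_sum_range]
      exact IsIntegral.sum _ fun i _ => (hωi.pow i).smul _
    · intro x hx
      have hx : IsIntegral R x := hx
      let st : L →ₐ[R] L :=
        { (starRingEnd L : L →+* L) with
          commutes' := by
            intro r
            change star (algebraMap R L r) = algebraMap R L r
            have h : algebraMap R L r = ⟨algebraMap R F r, 0⟩ := rfl
            rw [h, QuadraticAlgebra.star_mk]
            ext <;> simp }
      have hsx : IsIntegral R (star x) := hx.map st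
      have hinjL : Function.Injective (algebraMap F L) := (algebraMap F L).injective
      have htr : IsIntegral R (QuadraticAlgebra.trace x) := by
        rw [← isIntegral_algebraMap_iff hinjL, QuadraticAlgebra.algebraMap_trace_eq_add_star]
        exact hx.add hsx
      have hnm : IsIntegral R (QuadraticAlgebra.norm x) := by
        rw [← isIntegral_algebraMap_iff hinjL, QuadraticAlgebra.algebraMap_norm_eq_mul_star]
        exact hx.mul hsx
      obtain ⟨t, ht⟩ := IsIntegrallyClosed.isIntegral_iff.1 htr
      obtain ⟨m, hm⟩ := IsIntegrallyClosed.isIntegral_iff.1 hnm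
      rw [QuadraticAlgebra.trace_def] at ht
      rw [QuadraticAlgebra.norm_def] at hm
      obtain ⟨u, hu⟩ := h2
      have hu' : algebraMap R F ↑u⁻¹ * 2 = 1 := by
        rw [← map_ofNat (algebraMap R F) 2, ← map_mul, ← hu]; simp
      have hre : algebraMap R F (↑u⁻¹ * t) = x.re := by
        rw [map_mul, ht]
        linear_combination x.re * hu'
      obtain ⟨b, hb⟩ := mem_of_sq_mul f hf x.im ((↑u⁻¹ * t) ^ 2 - m) (by
        rw [map_sub, map_pow, hre, hm]
        change x.im ^ 2 * f' = _
        ring)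
      refine ⟨Polynomial.C b * Polynomial.X + Polynomial.C (↑u⁻¹ * t), ?_⟩
      change φ _ = x
      rw [hlin, hre, hb]
  have e : (Polynomial R ⧸ Ideal.span {(Polynomial.X ^ 2 - Polynomial.C f : Polynomial R)}) ≃+*
      integralClosure R L :=
    (Ideal.quotEquivOfEq hker.symm).trans ((RingHom.quotientKerEquivRange φ.toRingHom).trans
      (Subalgebra.equivOfEq _ _ hrange).toRingEquiv)
  haveI : IsIntegrallyClosed (integralClosure R L) :=
    integralClosure.isIntegrallyClosedOfFiniteExtension F
  exact ⟨e.toMulEquiv.isDomain _, IsIntegrallyClosed.of_equiv e.symm⟩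

end Stmt15Aux

/-- the hypersurface H = K[A,X,Y]/(A² - XY(Xⁿ-Y)) (variables 0=A, 1=X,
2=Y, char K = p > 2) is a normal integral domain. -/
theorem stmt15 (K : Type) [Field K] (p : ℕ) [Fact p.Prime] [CharP K p] (hp : 2 < p)
    (n : ℕ) (hn : 0 < n)
    (hH : Ideal (MvPolynomial (Fin 3) K))
    (hhH : hH = Ideal.span {(X 0 ^ 2 - X 1 * X 2 * (X 1 ^ n - X 2) : MvPolynomial (Fin 3) K)}) :
    IsDomain (MvPolynomial (Fin 3) K ⧸ hH) ∧
    IsIntegrallyClosed (MvPolynomial (Fin 3) K ⧸ hH) := by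
  have h2K : (2 : K) ≠ 0 := Ring.two_ne_zero (by rw [ringChar.eq K p]; omega)
  have h2 : IsUnit (2 : MvPolynomial (Fin 2) K) := by
    have := (IsUnit.mk0 _ h2K).map (C : K →+* MvPolynomial (Fin 2) K)
    rwa [map_ofNat] at this
  have hnu : ¬ IsUnit (X 0 * X 1 * (X 0 ^ n - X 1) : MvPolynomial (Fin 2) K) := fun h =>
    (X_prime (R := K) (i := (0 : Fin 2))).not_unit
      (isUnit_of_mul_isUnit_left (isUnit_of_mul_isUnit_left h))
  obtain ⟨hd, hi⟩ := Stmt15Aux.main _ (Stmt15Aux.squarefree_f K n hn) hnu h2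
  have h1 : finSuccEquiv K 2 (X 1) = Polynomial.C (X 0) := finSuccEquiv_X_succ (j := 0)
  have h2' : finSuccEquiv K 2 (X 2) = Polynomial.C (X 1) := finSuccEquiv_X_succ (j := 1)
  have hmap : Ideal.span {(Polynomial.X ^ 2 - Polynomial.C (X 0 * X 1 * (X 0 ^ n - X 1)) :
      Polynomial (MvPolynomial (Fin 2) K))} =
      hH.map ((finSuccEquiv K 2).toRingEquiv : MvPolynomial (Fin 3) K →+* _) := by
    rw [hhH, Ideal.map_span, Set.image_singleton]
    congr 2
    change _ = finSuccEquiv K 2 _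
    simp only [map_sub, map_mul, map_pow, h1, h2', finSuccEquiv_X_zero]
  let e := Ideal.quotientEquiv _ _ (finSuccEquiv K 2).toRingEquiv hmap
  exact ⟨e.toMulEquiv.isDomain _, IsIntegrallyClosed.of_equiv (R := Polynomial (MvPolynomial (Fin 2) K) ⧸ Ideal.span
    {(Polynomial.X ^ 2 - Polynomial.C (X 0 * X 1 * (X 0 ^ n - X 1)) :
      Polynomial (MvPolynomial (Fin 2) K))}) e.symm⟩
end

section
/- Let K be a field of characteristic p > 2, and let m, n be positive integers with mn - m - 2n > 0. Let R = K[A,B,C,D,T]/I as above. Then b^n t^{m-1} lies in the tight closure (a, d)* but not in (a, d); hence the ideal (a, d) of R is not tightly closed and R is not weakly F-regular. -/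
open MvPolynomial

/-- Core reduction: a monomial in the ideal. -/
lemma core_aux {S : Type*} [CommRing S] (α b c d τ : S) (n : ℕ)
    (h1 : α * τ = b * c) (h2 : τ * (b ^ n - d) = c * d) (h3 : b * (b ^ n - d) = α * d)
    (J : Ideal S) (h q i g : ℕ) (hα : α ^ h ∈ J) (hd : d ^ q ∈ J)
    (H : ∀ u r : ℕ, i + u < h → n * r ≤ u + n → u + r ≤ g) :
    ∀ (r w u y : ℕ), w + r = q → y + u = n * r →
      α ^ (i + u) * d ^ w * b ^ y * τ ^ g ∈ J := by
  intro r
  induction r with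
  | zero =>
    intro w u y hw hy
    obtain rfl : w = q := by omega
    have : α ^ (i + u) * d ^ w * b ^ y * τ ^ g = (α ^ (i + u) * b ^ y * τ ^ g) * d ^ w := by ring
    rw [this]
    exact J.mul_mem_left _ hd
  | succ r ih =>
    intro w u y hw hy
    by_cases hu : h ≤ i + u
    · obtain ⟨z, hz⟩ := Nat.exists_eq_add_of_le hu
      have : α ^ (i + u) * d ^ w * b ^ y * τ ^ g = (α ^ z * d ^ w * b ^ y * τ ^ g) * α ^ h := by
        rw [hz]; ring
      rw [this]
      exact J.mul_mem_left _ hα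
    · push Not at hu
      by_cases hyn : n + 1 ≤ y
      · obtain ⟨z, rfl⟩ := Nat.exists_eq_add_of_le hyn
        have e1 := ih (w + 1) u (z + 1) (by omega) (by rw [Nat.mul_succ] at hy; omega)
        have e2 := ih (w + 1) (u + 1) z (by omega) (by rw [Nat.mul_succ] at hy; omega)
        have := J.add_mem e1 e2
        convert this using 1
        have h3' : b ^ (n + 1) = d * b + α * d := by linear_combination h3
        rw [pow_add b (n + 1) z, h3']
        ring
      · have hr := H u (r + 1) hu (by omega)
        obtain ⟨z, rfl⟩ := Nat.exists_eq_add_of_le hr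
        have e1 : b ^ n * τ = d * (τ + c) := by linear_combination h2
        have : α ^ (i + u) * d ^ w * b ^ y * τ ^ (u + (r + 1) + z)
            = (α ^ i * c ^ u * τ ^ z * (τ + c) ^ (r + 1)) * d ^ q := by
          calc _ = α ^ i * d ^ w * b ^ y * (α * τ) ^ u * τ ^ (r + 1) * τ ^ z := by ring
            _ = α ^ i * d ^ w * c ^ u * b ^ (y + u) * τ ^ (r + 1) * τ ^ z := by rw [h1]; ring
            _ = α ^ i * d ^ w * c ^ u * (b ^ n * τ) ^ (r + 1) * τ ^ z := by rw [hy]; ring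
            _ = _ := by rw [e1, ← hw, mul_pow]; ring
        rw [this]
        exact J.mul_mem_left _ hd

lemma num_aux (m n k : ℕ) (hm : 0 < m) (hn : 0 < n) (hmn : m + 2 * n < m * n) (hk : n ≤ k) :
    k + 1 + k / n ≤ (m - 1) * (2 * k + 1) / m := by
  rw [Nat.le_div_iff_mul_le hm]
  obtain ⟨m, rfl⟩ := Nat.exists_eq_add_of_lt hm
  have h1 : n * (k / n) ≤ k := Nat.mul_div_le k n
  generalize k / n = f at *
  simp only [zero_add, Nat.add_sub_cancel] at *
  refine Nat.le_of_mul_le_mul_left ?_ hn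
  nlinarith [Nat.mul_le_mul_left (m + 1) h1, Nat.mul_le_mul_left k (Nat.succ_le_of_lt hmn)]

lemma frob_aux {S : Type*} [CommRing S] (a b c d t : S) (m n : ℕ) (hm : 0 < m) (hn : 0 < n)
    (hmn : m + 2 * n < m * n)
    (h1 : a ^ 2 * (a ^ 2 + t ^ m) = b * c) (h2 : (a ^ 2 + t ^ m) * (b ^ n - d) = c * d)
    (h3 : b * (b ^ n - d) = a ^ 2 * d) (k : ℕ) (hk : n ≤ k) :
    (b ^ n * t ^ (m - 1)) ^ (2 * k + 1) ∈ Ideal.span {a ^ (2 * k + 1), d ^ (2 * k + 1)} := by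
  set J := Ideal.span {a ^ (2 * k + 1), d ^ (2 * k + 1)} with hJ
  have ha : (a ^ 2) ^ (k + 1) ∈ J := by
    have : (a ^ 2) ^ (k + 1) = a * a ^ (2 * k + 1) := by ring
    rw [this]
    exact J.mul_mem_left _ (Ideal.subset_span (by simp))
  have hd : d ^ (2 * k + 1) ∈ J := Ideal.subset_span (by simp)
  set N := (m - 1) * (2 * k + 1) / m with hN
  have hnum : k + 1 + k / n ≤ N := num_aux m n k hm hn hmn hk
  have key : b ^ (n * (2 * k + 1)) * (t ^ m) ^ N ∈ J := by
    have : t ^ m = -(a ^ 2) + (a ^ 2 + t ^ m) := by ring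
    rw [this, add_pow, Finset.mul_sum]
    refine J.sum_mem fun i hi => ?_
    have hi' : i ≤ N := by simpa [Nat.lt_succ_iff] using hi
    have := core_aux (a ^ 2) b c d (a ^ 2 + t ^ m) n h1 h2 h3 J (k + 1) (2 * k + 1) i (N - i)
      ha hd (by
        intro u r hu hr
        have : r ≤ 1 + k / n := by
          have h5 : r ≤ (u + n) / n := by
            rw [Nat.le_div_iff_mul_le hn]; linarith
          rw [Nat.add_div_right _ hn] at h5
          have : u / n ≤ k / n := Nat.div_le_div_right (by omega)
          omega
        omega) (2 * k + 1) 0 0 (n * (2 * k + 1)) (by omega) (by omega)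
    have h6 := J.mul_mem_left ((-1) ^ i * (N.choose i : S)) this
    convert h6 using 1
    rw [neg_pow (a ^ 2) i]
    simp only [add_zero, pow_zero, mul_one]
    ring
  have h7 : m * N ≤ (m - 1) * (2 * k + 1) := Nat.mul_div_le _ _
  obtain ⟨z, hz⟩ := Nat.exists_eq_add_of_le h7
  have : (b ^ n * t ^ (m - 1)) ^ (2 * k + 1)
      = t ^ z * (b ^ (n * (2 * k + 1)) * (t ^ m) ^ N) := by
    rw [mul_pow, ← pow_mul, ← pow_mul, hz, pow_add, pow_mul t m N]; ring
  rw [this]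
  exact J.mul_mem_left _ key

lemma notmem_aux (K : Type) [Field K] (m n : ℕ) (hm : 0 < m) (hn : 0 < n)
    (J : Ideal (MvPolynomial (Fin 5) K))
    (hJ : J = Ideal.span {X 0, X 2, X 3, X 1 ^ (n + 1), X 1 ^ n * X 4 ^ m}) :
    (X 1 ^ n * X 4 ^ (m - 1) : MvPolynomial (Fin 5) K) ∉ J := by
  classical
  have e : ({X 0, X 2, X 3, X 1 ^ (n + 1), X 1 ^ n * X 4 ^ m} : Set (MvPolynomial (Fin 5) K)) =
      (fun s => monomial s (1 : K)) '' {Finsupp.single 0 1, Finsupp.single 2 1,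
        Finsupp.single 3 1, Finsupp.single 1 (n + 1), Finsupp.single 1 n + Finsupp.single 4 m} := by
    simp only [Set.image_insert_eq, Set.image_singleton, X_pow_eq_monomial, monomial_mul, one_mul]
    rfl
  rw [hJ, e, mem_ideal_span_monomial_image]
  intro h
  have h0 : (X 1 ^ n * X 4 ^ (m - 1) : MvPolynomial (Fin 5) K) =
      monomial (Finsupp.single 1 n + Finsupp.single 4 (m - 1)) 1 := by
    simp only [X_pow_eq_monomial, monomial_mul, one_mul]
  obtain ⟨s, hs, hle⟩ := h (Finsupp.single 1 n + Finsupp.single 4 (m - 1)) (by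
    rw [h0, mem_support_iff, coeff_monomial, if_pos rfl]; exact one_ne_zero)
  simp only [Set.mem_insert_iff, Set.mem_singleton_iff] at hs
  rcases hs with rfl | rfl | rfl | rfl | rfl
  · simpa [Finsupp.single_apply] using hle 0
  · simpa [Finsupp.single_apply] using hle 2
  · simpa [Finsupp.single_apply] using hle 3
  · simpa [Finsupp.single_apply] using hle 1
  · have := hle 4
    simp [Finsupp.single_apply] at this
    omega

/-- with char K = p > 2 and mn - m - 2n > 0, in R = K[A,B,C,D,T]/I
(variables 0=A, 1=B, 2=C, 3=D, 4=T), the element bⁿt^{m-1} lies in the tight closure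
of (a, d) (there is a multiplier c₀ outside every minimal prime with
c₀·(bⁿt^{m-1})^q ∈ (a^q, d^q) for all q = p^e ≫ 0), but bⁿt^{m-1} ∉ (a, d);
hence (a, d) is not tightly closed and R is not weakly F-regular. -/
theorem stmt17 (K : Type) [Field K] (p : ℕ) [Fact p.Prime] [CharP K p] (hp : 2 < p)
    (m n : ℕ) (hm : 0 < m) (hn : 0 < n) (hmn : m + 2 * n < m * n)
    (I : Ideal (MvPolynomial (Fin 5) K))
    (hI : I = Ideal.span
      { (X 0 ^ 2) * (X 0 ^ 2 + X 4 ^ m) - X 1 * X 2,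
        (X 0 ^ 2 + X 4 ^ m) * (X 1 ^ n - X 3) - X 2 * X 3,
        X 1 * (X 1 ^ n - X 3) - (X 0 ^ 2) * X 3 })
    (a b d t : MvPolynomial (Fin 5) K ⧸ I)
    (ha : a = Ideal.Quotient.mk I (X 0)) (hb : b = Ideal.Quotient.mk I (X 1))
    (hd : d = Ideal.Quotient.mk I (X 3)) (ht : t = Ideal.Quotient.mk I (X 4)) :
    (∃ c₀ : MvPolynomial (Fin 5) K ⧸ I,
      (∀ P ∈ minimalPrimes (MvPolynomial (Fin 5) K ⧸ I), c₀ ∉ P) ∧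
      ∃ q₀ : ℕ, ∀ e : ℕ, q₀ ≤ p ^ e →
        c₀ * (b ^ n * t ^ (m - 1)) ^ (p ^ e) ∈
          Ideal.span {a ^ (p ^ e), d ^ (p ^ e)}) ∧
    b ^ n * t ^ (m - 1) ∉ Ideal.span {a, d} := by
  have hX : ∀ f ∈ ({ (X 0 ^ 2) * (X 0 ^ 2 + X 4 ^ m) - X 1 * X 2,
        (X 0 ^ 2 + X 4 ^ m) * (X 1 ^ n - X 3) - X 2 * X 3,
        X 1 * (X 1 ^ n - X 3) - (X 0 ^ 2) * X 3 } : Set (MvPolynomial (Fin 5) K)),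
      Ideal.Quotient.mk I f = 0 := by
    intro f hf
    rw [Ideal.Quotient.eq_zero_iff_mem, hI]
    exact Ideal.subset_span hf
  constructor
  · refine ⟨1, fun P hP => ?_, 2 * n + 1, fun e he => ?_⟩
    · have hPp : P.IsPrime := hP.1.1
      exact (Ideal.ne_top_iff_one P).mp hPp.ne_top
    · have hodd : Odd (p ^ e) :=
        ((Fact.out : p.Prime).odd_of_ne_two (by omega)).pow
      obtain ⟨k, hk⟩ := hodd
      rw [hk, one_mul]
      have r1 := hX _ (Set.mem_insert _ _)
      have r2 := hX _ (Set.mem_insert_of_mem _ (Set.mem_insert _ _))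
      have r3 := hX _ (Set.mem_insert_of_mem _ (Set.mem_insert_of_mem _ (Set.mem_singleton _)))
      simp only [map_sub, map_mul, map_add, map_pow, ← ha, ← hb, ← hd, ← ht, sub_eq_zero]
        at r1 r2 r3
      refine frob_aux a b (Ideal.Quotient.mk I (X 2)) d t m n hm hn hmn r1 r2 ?_ k (by omega)
      exact r3
  · intro hmem
    set J : Ideal (MvPolynomial (Fin 5) K) :=
      Ideal.span {X 0, X 2, X 3, X 1 ^ (n + 1), X 1 ^ n * X 4 ^ m} with hJ
    refine notmem_aux K m n hm hn J hJ ?_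
    have j0 : (X 0 : MvPolynomial (Fin 5) K) ∈ J := Ideal.subset_span (by simp)
    have j2 : (X 2 : MvPolynomial (Fin 5) K) ∈ J := Ideal.subset_span (by simp)
    have j3 : (X 3 : MvPolynomial (Fin 5) K) ∈ J := Ideal.subset_span (by simp)
    have j1 : (X 1 ^ (n + 1) : MvPolynomial (Fin 5) K) ∈ J := Ideal.subset_span (by simp)
    have j4 : (X 1 ^ n * X 4 ^ m : MvPolynomial (Fin 5) K) ∈ J := Ideal.subset_span (by simp)
    have hIJ : I ≤ J := by
      rw [hI, Ideal.span_le]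
      rintro f (rfl | rfl | rfl) <;> rw [SetLike.mem_coe]
      · have := J.sub_mem (J.mul_mem_left (X 0 * (X 0 ^ 2 + X 4 ^ m)) j0)
          (J.mul_mem_left (X 1) j2)
        convert this using 1; ring
      · have := J.sub_mem (J.add_mem (J.mul_mem_left (X 0 * (X 1 ^ n - X 3)) j0) j4)
          (J.mul_mem_left (X 4 ^ m + X 2) j3)
        convert this using 1; ring
      · have := J.sub_mem j1 (J.mul_mem_left (X 1 + X 0 ^ 2) j3)
        convert this using 1; ring
    rw [Ideal.mem_span_pair] at hmem
    obtain ⟨u, v, huv⟩ := hmem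
    obtain ⟨U, rfl⟩ := Ideal.Quotient.mk_surjective u
    obtain ⟨V, rfl⟩ := Ideal.Quotient.mk_surjective v
    rw [ha, hb, hd, ht, ← map_mul, ← map_mul, ← map_add, ← map_pow, ← map_pow, ← map_mul, eq_comm,
      Ideal.Quotient.eq] at huv
    have := J.add_mem (hIJ huv) (J.add_mem (J.mul_mem_left U j0) (J.mul_mem_left V j3))
    convert this using 1; ring
end
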